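/- arXiv:2509.15086 — 2 statements merged into one kernel-verified Lean document; each statement's English description precedes it below -/
import Mathlib

section
/- Suppose A is a C*-algebra such that: (1) A is surjectively universal; (2) A ≅ A × A; and (3) A does not have the lifting property. Then for any cofinal ultrafilter U on the directed set N̂ of finite subsets of ℕ, A does not have property max-U. In particular, P^max is not Th(A)-definable. -/
/-!
Surjective universality alone prevents property max-`U`: the absence of the lifting property enters
only through an explicit witness, an amplified free group.

Let `F` be the free group on five generators and `S` the set of its ten letters. The sum of the
letters has norm at most `6` in the left regular representation (`l2_adj_le`, a Schur test with
weight `3^(-|w|)`), and at most `6` after tensoring with any finite-dimensional unitary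
representation of `F` (`norm_adjOp_le`), which is absorbed by the regular one. On the other hand,
any diagonal representation of `F` with a fixed vector gives the value `10`.

`F` acts by permutations on its ball of radius `J.card`, and no nontrivial word of length at most
`J.card` acts trivially. Let `u_J` be the left regular representation of the permutation group of
this ball, pulled back to `F`, and `u = (u_J)` the resulting bounded family of matrices.
Since `J.card → ∞` along `U`, the limit of the normalized traces restricts to the canonical trace
of `F`. On its `L²`-space, bounded families of matrices act by left multiplication and, commuting
with this, by right multiplication with the transpose; the action `W` of `F` by left multiplication
with `u` is of regular type, and the class of `1` is fixed by the diagonal action. Let `D` be the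
separable C*-algebra generated by `W`. Then `∑_{s ∈ S} W s ⊗ u s` has norm at least `10` in the joint
representation, but its components `∑ W s ⊗ u_J s` in `D ⊗ Mat` have norm at most `6`
(`exists_model`).

Take surjections of `A` onto `D` and onto all the matrix algebras. As the tensor product of `D` with
matrices is algebraic, the bound by `6` is witnessed by an identity `Y* Y = 36 - x* x` there. Lifting
this identity to `A ⊗ A` leaves a remainder in the kernel, which is made small by multiplying the lifts
from the right with elements of an approximate unit of the kernels; this leaves lifts of maximal
tensor norm at most `7` (`exists_lifts`). The joint representation composed with the induced maps on
the ultrapower bounds the norm of their ultraproduct in `A^U ⊗_max A^U` from below by `10`. So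
max-`U` fails (`not_hasMaxU`); all that is needed from `U` is that `J.card → ∞` along it.

If the maximal norm were definable, then Łoś's theorem (`IsCStarUltraproduct.los`), applied to
formulas approximating it and to `A` and its ultrapower, would give max-`U` for every ultrafilter
(`hasMaxU_of_definable`).
-/

open scoped TensorProduct
open Filter Topology Function

noncomputable section

/-- A pair of commuting unital *-representations of `A` and `B` on a common C*-algebra;
these correspond exactly to the *-homomorphisms of the algebraic tensor product
`A ⊗[ℂ] B` into C*-algebras. -/
structure CommutingRepPair (A B : Type) [CStarAlgebra A] [CStarAlgebra B] : Type 1 where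
  carrier : Type
  [inst : CStarAlgebra carrier]
  fst : A →⋆ₐ[ℂ] carrier
  snd : B →⋆ₐ[ℂ] carrier
  commutes : ∀ a b, Commute (fst a) (snd b)

attribute [instance] CommutingRepPair.inst

/-- The *-homomorphism `A ⊗[ℂ] B → C` induced by a commuting pair of representations. -/
def CommutingRepPair.hom {A B : Type} [CStarAlgebra A] [CStarAlgebra B]
    (p : CommutingRepPair A B) : A ⊗[ℂ] B →ₐ[ℂ] p.carrier :=
  Algebra.TensorProduct.lift p.fst.toAlgHom p.snd.toAlgHom p.commutes

/-- The maximal tensor norm on `A ⊗[ℂ] B`: the supremum of `‖π x‖` over all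
*-homomorphisms `π` of the algebraic tensor product into a C*-algebra, equivalently over
all pairs of commuting unital *-representations of `A` and `B`. -/
def maxNorm (A B : Type) [CStarAlgebra A] [CStarAlgebra B] (x : A ⊗[ℂ] B) : ℝ :=
  sSup {r : ℝ | ∃ p : CommutingRepPair A B, r = ‖p.hom x‖}

/-- A family of elements of C*-algebras is (uniformly norm-)bounded. -/
def Bdd {I : Type} {A : I → Type} [∀ i, CStarAlgebra (A i)] (f : ∀ i, A i) : Prop :=
  ∃ M : ℝ, ∀ i, ‖f i‖ ≤ M

/-- `π : (∀ i, A i) → B` realizes `B` as the C*-algebra ultraproduct `∏_U A_i`, i.e. as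
the quotient of the ℓ∞-product of the `A i` by the ideal of bounded families whose norms
tend to `0` along `U`:  `π` is a unital *-homomorphism on bounded families, every element
of `B` lifts to a bounded family (with control of norms), and the norm of `π f` is the
`U`-limit of the norms `‖f i‖`.  This data determines `B` uniquely up to isometric
*-isomorphism. -/
structure IsCStarUltraproduct {I : Type} (U : Ultrafilter I) (A : I → Type)
    [∀ i, CStarAlgebra (A i)] (B : Type) [CStarAlgebra B]
    (π : (∀ i, A i) → B) : Prop where
  map_one : π 1 = 1
  map_add : ∀ f g, Bdd f → Bdd g → π (f + g) = π f + π g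
  map_mul : ∀ f g, Bdd f → Bdd g → π (f * g) = π f * π g
  map_star : ∀ f, Bdd f → π (star f) = star (π f)
  map_smul : ∀ (c : ℂ) f, Bdd f → π (c • f) = c • π f
  norm_eq : ∀ f, Bdd f → Tendsto (fun i => ‖f i‖) (U : Filter I) (nhds ‖π f‖)
  surj : ∀ b : B, ∃ f, (∀ i, ‖f i‖ ≤ ‖b‖) ∧ π f = b

/-- *-polynomial terms in `n` variables over `ℂ`: the terms of the continuous-logic
language of (unital) C*-algebras. -/
inductive CTerm : ℕ → Type
  | var {n : ℕ} : Fin n → CTerm n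
  | one {n : ℕ} : CTerm n
  | add {n : ℕ} : CTerm n → CTerm n → CTerm n
  | mul {n : ℕ} : CTerm n → CTerm n → CTerm n
  | star {n : ℕ} : CTerm n → CTerm n
  | smul {n : ℕ} : ℂ → CTerm n → CTerm n

/-- Evaluation of a *-polynomial term in a C*-algebra. -/
def CTerm.eval {A : Type} [CStarAlgebra A] : ∀ {n : ℕ}, CTerm n → (Fin n → A) → A
  | _, CTerm.var i, a => a i
  | _, CTerm.one, _ => 1
  | _, CTerm.add s t, a => CTerm.eval s a + CTerm.eval t a
  | _, CTerm.mul s t, a => CTerm.eval s a * CTerm.eval t a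
  | _, CTerm.star t, a => Star.star (CTerm.eval t a)
  | _, CTerm.smul c t, a => c • CTerm.eval t a

/-- Formulas of the continuous-logic language of (unital) C*-algebras in `n` free
variables (all variables ranging over the closed unit ball): atomic formulas `‖t‖` for
*-polynomial terms `t`, closed under continuous combinations and the quantifiers
`sup` and `inf` over the unit ball. -/
inductive Formula : ℕ → Type
  | atom {n : ℕ} : CTerm n → Formula n
  | comb {n k : ℕ} (u : (Fin k → ℝ) → ℝ) (hu : Continuous u)
      (phis : Fin k → Formula n) : Formula n
  | sup {n : ℕ} : Formula (n + 1) → Formula n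
  | inf {n : ℕ} : Formula (n + 1) → Formula n

/-- The interpretation of a formula in a (unital) C*-algebra, the quantified variables
ranging over the closed unit ball. -/
def Formula.interp (A : Type) [CStarAlgebra A] :
    ∀ {n : ℕ}, Formula n → (Fin n → A) → ℝ
  | _, Formula.atom t, a => ‖t.eval a‖
  | _, Formula.comb u _ phis, a => u fun j => (phis j).interp A a
  | _, Formula.sup phi, a => ⨆ b : {x : A // ‖x‖ ≤ 1}, phi.interp A (Fin.snoc a b.1)
  | _, Formula.inf phi, a => ⨅ b : {x : A // ‖x‖ ≤ 1}, phi.interp A (Fin.snoc a b.1)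

/-- A sentence is a formula with no free variables. -/
abbrev Sentence := Formula 0

/-- A theory of (unital) C*-algebras: a set of sentences, each imposed as the condition
`σ = 0`. -/
abbrev CStarTheory := Set Sentence

/-- `A` is a model of the theory `T`. -/
def Models (A : Type) [CStarAlgebra A] (T : CStarTheory) : Prop :=
  ∀ σ ∈ T, σ.interp A finZeroElim = 0

/-- Two C*-algebras are elementarily equivalent if they satisfy the same sentences of
the continuous-logic language of C*-algebras; the models of `Th(A)` are exactly the
C*-algebras elementarily equivalent to `A`. -/
def ElemEquiv (A B : Type) [CStarAlgebra A] [CStarAlgebra B] : Prop :=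
  ∀ σ : Sentence, σ.interp A finZeroElim = σ.interp B finZeroElim

/-- `A` has property max-`U`: for every realization of the ultrapower `A^U` and every
ultrapower tensor `Σ_k a^k ⊗ b^k` (presented by bounded families of representatives), the
norm computed in `A^U ⊗_max A^U` agrees with the norm of its natural image in
`(A ⊗_max A)^U`, i.e. the unique *-homomorphism
`A^U ⊗_max A^U → (A ⊗_max A)^U` with `Σ a^k ⊗ b^k ↦ (Σ a^k_i ⊗ b^k_i)_U` is an isometric
embedding. -/
def HasMaxU {I : Type} (U : Ultrafilter I) (A : Type) [CStarAlgebra A] : Prop :=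
  ∀ (B : Type) [CStarAlgebra B] (π : (I → A) → B),
    IsCStarUltraproduct U (fun _ => A) B π →
    ∀ (n : ℕ) (f g : Fin n → I → A), (∀ k, Bdd (f k)) → (∀ k, Bdd (g k)) →
      Tendsto (fun i => maxNorm A A (∑ k, f k i ⊗ₜ[ℂ] g k i)) (U : Filter I)
        (nhds (maxNorm B B (∑ k, π (f k) ⊗ₜ[ℂ] π (g k))))

/-- A linear map between C*-algebras is unital and completely positive. -/
def IsUCP {A B : Type} [CStarAlgebra A] [CStarAlgebra B] (φ : A →ₗ[ℂ] B) : Prop :=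
  φ 1 = 1 ∧
  ∀ (m : ℕ) (M : Matrix (Fin m) (Fin m) A),
    (∃ N : Matrix (Fin m) (Fin m) A, M = N.conjTranspose * N) →
    ∃ P : Matrix (Fin m) (Fin m) B, M.map φ = P.conjTranspose * P

/-- `A` has the lifting property (LP): every ucp map from `A` into a quotient C*-algebra
(equivalently, along a surjective *-homomorphism `q : B → C`) admits a ucp lift to `B`. -/
def HasLP (A : Type) [CStarAlgebra A] : Prop :=
  ∀ (B C : Type) [CStarAlgebra B] [CStarAlgebra C] (q : B →⋆ₐ[ℂ] C), Surjective q →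
    ∀ φ : A →ₗ[ℂ] C, IsUCP φ → ∃ ψ : A →ₗ[ℂ] B, IsUCP ψ ∧ ∀ a, q (ψ a) = φ a

/-- `A` is surjectively universal: every separable C*-algebra is the image of a
surjective *-homomorphism from `A`. -/
def SurjectivelyUniversal (A : Type) [CStarAlgebra A] : Prop :=
  ∀ (B : Type) [CStarAlgebra B], TopologicalSpace.SeparableSpace B →
    ∃ q : A →⋆ₐ[ℂ] B, Surjective q

/-! ### The adjacency operator of the free group -/

/-- The free group on five generators. -/
abbrev FG : Type := FreeGroup (Fin 5)

/-- The ten letters (generators and their inverses) of the free group on five generators. -/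
abbrev Ltr : Type := Fin 5 × Bool

/-- The group element given by a single letter. -/
def gen (p : Ltr) : FG := FreeGroup.mk [p]

/-- The formal inverse of a letter. -/
def linv (p : Ltr) : Ltr := (p.1, !p.2)

lemma linv_linv (p : Ltr) : linv (linv p) = p := by simp [linv]

/-- Inversion of letters as a permutation. -/
def linvEquiv : Ltr ≃ Ltr := ⟨linv, linv, linv_linv, linv_linv⟩

lemma gen_linv (p : Ltr) : gen (linv p) = (gen p)⁻¹ := by
  simp [gen, linv, FreeGroup.inv_mk, FreeGroup.invRev]

lemma norm_gen_mul (p : Ltr) (w : FG) (h : w.toWord.head? ≠ some (linv p)) :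
    (gen p * w).norm = w.norm + 1 := by
  have h1 : (gen p * w).toWord = p :: w.toWord := by
    rw [FreeGroup.toWord_mul, gen, FreeGroup.toWord_mk]
    have h2 : FreeGroup.reduce [p] = [p] := by simp
    rw [h2, List.singleton_append, FreeGroup.reduce.cons, FreeGroup.reduce_toWord]
    cases hw : w.toWord with
    | nil => rfl
    | cons hd tl =>
      have h3 : ¬ (p.1 = hd.1 ∧ p.2 = !hd.2) := by
        rintro ⟨h4, h5⟩
        apply h
        rw [hw]
        simp [linv, h4, h5]
      simp only [h3, if_false]
  simp [FreeGroup.norm, h1]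

lemma norm_le_norm_gen_mul (p : Ltr) (w : FG) : w.norm ≤ (gen p * w).norm + 1 := by
  have h := FreeGroup.norm_mul_le (gen p)⁻¹ (gen p * w)
  have h2 : ((gen p)⁻¹).norm ≤ 1 := by
    rw [← gen_linv]; exact FreeGroup.norm_mk_le
  rw [inv_mul_cancel_left] at h
  omega

/-- The weight used in the Schur test. -/
def wt (w : FG) : ℝ := (1 / 3) ^ w.norm

lemma wt_pos (w : FG) : 0 < wt w := by unfold wt; positivity

/-- The weight is a positive supersolution: summing it over the ten neighbours of a vertex of the
Cayley tree multiplies it by at most `9 / 3 + 3 = 6`. -/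
lemma sum_wt_le (w : FG) : ∑ p : Ltr, wt (gen p * w) ≤ 6 * wt w := by
  have h1 : ∀ p, wt (gen p * w) ≤
      wt w / 3 + if w.toWord.head? = some (linv p) then (8 / 3) * wt w else 0 := by
    intro p
    split_ifs with h
    · have h2 := norm_le_norm_gen_mul p w
      have h3 : wt (gen p * w) ≤ 3 * wt w := by
        unfold wt
        calc ((1 : ℝ) / 3) ^ (gen p * w).norm = 3 * (1 / 3) ^ ((gen p * w).norm + 1) := by
              rw [pow_succ]; ring
          _ ≤ 3 * (1 / 3) ^ w.norm := by
              have := pow_le_pow_of_le_one (by norm_num : (0 : ℝ) ≤ 1 / 3) (by norm_num) h2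
              linarith
      linarith
    · rw [wt, norm_gen_mul p w h, pow_succ, wt]; linarith
  refine (Finset.sum_le_sum fun p _ => h1 p).trans ?_
  rw [Finset.sum_add_distrib]
  have h4 : ∑ p : Ltr, (if w.toWord.head? = some (linv p) then (8 / 3) * wt w else 0)
      ≤ (8 / 3) * wt w := by
    have hp := wt_pos w
    cases hw : w.toWord.head? with
    | none => simp; exact hp.le
    | some q =>
      have : ∀ p, (some q = some (linv p)) ↔ linv q = p := by
        intro p
        constructor
        · intro h; rw [Option.some.inj h, linv_linv]
        · intro h; rw [← h, linv_linv]
      simp only [this]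
      rw [Finset.sum_ite_eq]
      simp
  have h5 : ∑ _p : Ltr, wt w / 3 = 10 * (wt w / 3) := by
    simp
  linarith

/-- Convolution by the sum of the ten letters. -/
def adj (f : FG →₀ ℝ) : FG →₀ ℝ := ∑ p : Ltr, f.mapDomain (gen p * ·)

/-- The square of the `ℓ²`-norm. -/
def l2 (f : FG →₀ ℝ) : ℝ := ∑ w ∈ f.support, f w ^ 2

lemma l2_nonneg (f : FG →₀ ℝ) : 0 ≤ l2 f := Finset.sum_nonneg fun _ _ => sq_nonneg _

lemma adj_apply (f : FG →₀ ℝ) (w : FG) : adj f w = ∑ p : Ltr, f (gen p * w) := by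
  have h1 : adj f w = ∑ p : Ltr, f (gen (linv p) * w) := by
    rw [adj, Finsupp.finsetSum_apply]
    refine Finset.sum_congr rfl fun p _ => ?_
    have : w = gen p * (gen (linv p) * w) := by rw [gen_linv, mul_inv_cancel_left]
    conv_lhs => rw [this]
    exact Finsupp.mapDomain_apply (mul_right_injective (gen p)) _ _
  rw [h1]
  exact linvEquiv.sum_comp (fun p => f (gen p * w))

/-- Schur test: convolution by the sum of the letters has norm at most `6 < 10` on `ℓ²`. -/
lemma l2_adj_le (f : FG →₀ ℝ) : l2 (adj f) ≤ 36 * l2 f := by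
  have h1 : ∀ w, adj f w ^ 2 ≤ 6 * ∑ p : Ltr, wt w * (f (gen p * w) ^ 2 / wt (gen p * w)) := by
    intro w
    rw [adj_apply]
    have hcs := Finset.sq_sum_div_le_sum_sq_div Finset.univ (fun p : Ltr => f (gen p * w))
      (g := fun p : Ltr => wt (gen p * w)) (fun p _ => wt_pos _)
    have hpos : 0 < ∑ p : Ltr, wt (gen p * w) := Finset.sum_pos (fun p _ => wt_pos _) ⟨default, Finset.mem_univ _⟩
    rw [div_le_iff₀ hpos] at hcs
    refine hcs.trans ?_
    rw [← Finset.mul_sum]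
    have h2 := sum_wt_le w
    have h3 : 0 ≤ ∑ p : Ltr, f (gen p * w) ^ 2 / wt (gen p * w) :=
      Finset.sum_nonneg fun p _ => div_nonneg (sq_nonneg _) (wt_pos _).le
    nlinarith
  have h2 : ∀ p : Ltr, ∑ w ∈ (adj f).support, wt w * (f (gen p * w) ^ 2 / wt (gen p * w)) ≤
      ∑ v ∈ f.support, wt (gen (linv p) * v) * (f v ^ 2 / wt v) := by
    intro p
    have hn : ∀ v, 0 ≤ wt (gen (linv p) * v) * (f v ^ 2 / wt v) := fun v =>
      mul_nonneg (wt_pos _).le (div_nonneg (sq_nonneg _) (wt_pos _).le)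
    classical
    have h3 : ∑ w ∈ (adj f).support, wt w * (f (gen p * w) ^ 2 / wt (gen p * w)) =
        ∑ v ∈ (adj f).support.image (gen p * ·), wt (gen (linv p) * v) * (f v ^ 2 / wt v) := by
      rw [Finset.sum_image (fun a _ b _ h => mul_right_injective (gen p) h)]
      refine Finset.sum_congr rfl fun w _ => ?_
      rw [gen_linv, inv_mul_cancel_left]
    rw [h3]
    calc _ ≤ ∑ v ∈ (adj f).support.image (gen p * ·) ∪ f.support,
          wt (gen (linv p) * v) * (f v ^ 2 / wt v) :=
          Finset.sum_le_sum_of_subset_of_nonneg Finset.subset_union_left fun v _ _ => hn v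
      _ = _ := by
          symm
          refine Finset.sum_subset Finset.subset_union_right fun v _ hv => ?_
          simp [Finsupp.notMem_support_iff.mp hv]
  calc l2 (adj f) ≤ ∑ w ∈ (adj f).support,
        6 * ∑ p : Ltr, wt w * (f (gen p * w) ^ 2 / wt (gen p * w)) :=
        Finset.sum_le_sum fun w _ => h1 w
    _ = 6 * ∑ p : Ltr, ∑ w ∈ (adj f).support, wt w * (f (gen p * w) ^ 2 / wt (gen p * w)) := by
        rw [← Finset.mul_sum, Finset.sum_comm]
    _ ≤ 6 * ∑ p : Ltr, ∑ v ∈ f.support, wt (gen (linv p) * v) * (f v ^ 2 / wt v) := by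
        have := Finset.sum_le_sum fun p (_ : p ∈ (Finset.univ : Finset Ltr)) => h2 p
        linarith
    _ = 6 * ∑ v ∈ f.support, (∑ p : Ltr, wt (gen p * v)) * (f v ^ 2 / wt v) := by
        rw [Finset.sum_comm]
        congr 1
        refine Finset.sum_congr rfl fun v _ => ?_
        rw [← Finset.sum_mul]
        congr 1
        exact linvEquiv.sum_comp (fun p => wt (gen p * v))
    _ ≤ 6 * ∑ v ∈ f.support, 6 * f v ^ 2 := by
        refine mul_le_mul_of_nonneg_left (Finset.sum_le_sum fun v hv => ?_) (by norm_num)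
        have h5 := sum_wt_le v
        have h6 : 0 ≤ f v ^ 2 / wt v := div_nonneg (sq_nonneg _) (wt_pos _).le
        calc _ ≤ (6 * wt v) * (f v ^ 2 / wt v) := by gcongr
          _ = 6 * f v ^ 2 := by
            have := (wt_pos v).ne'
            field_simp
    _ = 36 * l2 f := by rw [← Finset.mul_sum, l2]; ring

/-! ### Residual finiteness of the free group -/

/-- The ball of radius `n` in the free group. -/
abbrev FBall (n : ℕ) : Type := {w : FG // w.norm ≤ n}

instance (n : ℕ) : Finite (FBall n) := by
  have : Finite {l : List Ltr // l.length ≤ n} := List.finite_length_le _ _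
  exact Finite.of_injective (fun w : FBall n => (⟨w.1.toWord, w.2⟩ : {l : List Ltr // l.length ≤ n}))
    fun a b h => Subtype.ext (FreeGroup.toWord_injective (congrArg Subtype.val h))

instance (n : ℕ) : Fintype (FBall n) := Fintype.ofFinite _

/-- Left translation by `g`, as a partial bijection of the ball. -/
def partTrans (n : ℕ) (g : FG) :
    {w : FBall n // (g * w.1).norm ≤ n} ≃ {w : FBall n // (g⁻¹ * w.1).norm ≤ n} where
  toFun w := ⟨⟨g * w.1.1, w.2⟩, by simpa using w.1.2⟩
  invFun w := ⟨⟨g⁻¹ * w.1.1, w.2⟩, by simpa using w.1.2⟩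
  left_inv w := by simp
  right_inv w := by simp

open Classical in
/-- The action of the free group on its ball of radius `n` obtained by extending the partial
translations by the generators to permutations. -/
def ballHom (n : ℕ) : FG →* Equiv.Perm (FBall n) :=
  FreeGroup.lift fun i => (partTrans n (FreeGroup.of i)).extendSubtype

lemma ballHom_gen (n : ℕ) (p : Ltr) (w : FBall n) (h : (gen p * w.1).norm ≤ n) :
    ballHom n (gen p) w = ⟨gen p * w.1, h⟩ := by
  classical
  obtain ⟨i, b⟩ := p
  cases b with
  | true =>
    have h1 : gen (i, true) = FreeGroup.of i := rfl
    rw [ballHom]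
    simp only [h1] at h ⊢
    rw [FreeGroup.lift_apply_of]
    exact Equiv.extendSubtype_apply_of_mem (partTrans n (FreeGroup.of i)) w h
  | false =>
    have h1 : gen (i, false) = (FreeGroup.of i)⁻¹ := gen_linv (i, true)
    rw [ballHom]
    simp only [h1] at h ⊢
    rw [map_inv, FreeGroup.lift_apply_of, Equiv.Perm.inv_eq_iff_eq]
    have h2 : (FreeGroup.of i * ((FreeGroup.of i)⁻¹ * w.1)).norm ≤ n := by simpa using w.2
    have := Equiv.extendSubtype_apply_of_mem (partTrans n (FreeGroup.of i))
      ⟨(FreeGroup.of i)⁻¹ * w.1, h⟩ h2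
    rw [this]
    simp [partTrans]

lemma ballHom_one (n : ℕ) (l : List Ltr) (hl : FreeGroup.IsReduced l) (h : l.length ≤ n) :
    (ballHom n (FreeGroup.mk l) ⟨1, by simp⟩).1 = FreeGroup.mk l := by
  induction l with
  | nil =>
    have : (FreeGroup.mk [] : FG) = 1 := rfl
    simp [this]
  | cons p l ih =>
    have hl' : FreeGroup.IsReduced l := by
      rw [FreeGroup.IsReduced] at hl ⊢
      exact List.IsChain.of_cons hl
    have h1 : (FreeGroup.mk (p :: l) : FG) = gen p * FreeGroup.mk l := by
      simp [gen, FreeGroup.mul_mk]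
    have h2 := ih hl' (by simp at h; omega)
    have h3 : ballHom n (FreeGroup.mk l) ⟨1, by simp⟩ = ⟨FreeGroup.mk l, by
      rw [← h2]; exact (ballHom n (FreeGroup.mk l) ⟨1, by simp⟩).2⟩ := Subtype.ext h2
    have h4 : (gen p * FreeGroup.mk l).norm ≤ n := by
      rw [← h1]; exact FreeGroup.norm_mk_le.trans h
    rw [h1, map_mul, Equiv.Perm.mul_apply, h3, ballHom_gen n p _ h4]

lemma ballHom_eq_one (n : ℕ) (w : FG) (hw : w.norm ≤ n) (h : ballHom n w = 1) : w = 1 := by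
  have := ballHom_one n w.toWord FreeGroup.isReduced_toWord hw
  rw [FreeGroup.mk_toWord, h] at this
  simpa using this.symm

/-! ### C*-ultrapowers -/

/-- Bounded functions converge along an ultrafilter. -/
lemma tendsto_limUnder_ultrafilter {I X : Type} [NormedAddCommGroup X] [ProperSpace X]
    (U : Ultrafilter I) (f : I → X) {M : ℝ} (h : ∀ i, ‖f i‖ ≤ M) :
    Tendsto f U (𝓝 (limUnder (U : Filter I) f)) := by
  apply tendsto_nhds_limUnder
  obtain ⟨x, -, hx⟩ := (isCompact_closedBall (0 : X) M).ultrafilter_le_nhds (U.map f) (by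
    simp only [Ultrafilter.coe_map, le_principal_iff]
    exact Filter.mem_map.mpr (Filter.univ_mem' fun i => by simpa using h i))
  exact ⟨x, hx⟩

section Ultrapower

variable {I : Type} (U : Ultrafilter I) (A : Type) [CStarAlgebra A]

/-- The *-algebra of bounded families in `A`. -/
def bddFam (I : Type) (A : Type) [CStarAlgebra A] : StarSubalgebra ℂ (I → A) where
  carrier := {f | Bdd f}
  mul_mem' := by
    rintro f g ⟨M, hM⟩ ⟨N, hN⟩
    exact ⟨M * N, fun i => (norm_mul_le _ _).trans
      (mul_le_mul (hM i) (hN i) (norm_nonneg _) ((norm_nonneg _).trans (hM i)))⟩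
  add_mem' := by
    rintro f g ⟨M, hM⟩ ⟨N, hN⟩
    exact ⟨M + N, fun i => (norm_add_le _ _).trans (add_le_add (hM i) (hN i))⟩
  algebraMap_mem' c := ⟨‖algebraMap ℂ A c‖, fun i => le_rfl⟩
  star_mem' := by
    rintro f ⟨M, hM⟩
    exact ⟨M, fun i => by simpa using hM i⟩

/-- The bounded families in `A`, to be endowed with the seminorm `lim_U ‖f i‖`. -/
def PreUltra (_U : Ultrafilter I) (A : Type) [CStarAlgebra A] : Type := bddFam I A

namespace PreUltra

variable {U A}

instance : Ring (PreUltra U A) := inferInstanceAs (Ring (bddFam I A))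
instance : Algebra ℂ (PreUltra U A) := inferInstanceAs (Algebra ℂ (bddFam I A))
instance : StarRing (PreUltra U A) := inferInstanceAs (StarRing (bddFam I A))
instance : StarModule ℂ (PreUltra U A) := inferInstanceAs (StarModule ℂ (bddFam I A))

/-- The underlying family. -/
def val (f : PreUltra U A) : I → A := Subtype.val f

lemma bdd (f : PreUltra U A) : Bdd f.val := f.2

/-- A bounded family as an element of the pre-ultrapower. -/
def mk (U : Ultrafilter I) (f : I → A) (h : Bdd f) : PreUltra U A := ⟨f, h⟩

@[simp] lemma val_mk (f : I → A) (h : Bdd f) : (mk U f h).val = f := rfl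
@[simp] lemma val_one : (1 : PreUltra U A).val = 1 := rfl
@[simp] lemma val_zero : (0 : PreUltra U A).val = 0 := rfl
@[simp] lemma val_add (f g : PreUltra U A) : (f + g).val = f.val + g.val := rfl
@[simp] lemma val_sub (f g : PreUltra U A) : (f - g).val = f.val - g.val := rfl
@[simp] lemma val_neg (f : PreUltra U A) : (-f).val = -f.val := rfl
@[simp] lemma val_mul (f g : PreUltra U A) : (f * g).val = f.val * g.val := rfl
@[simp] lemma val_star (f : PreUltra U A) : (star f).val = star f.val := rfl
@[simp] lemma val_smul (c : ℂ) (f : PreUltra U A) : (c • f).val = c • f.val := rfl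
lemma ext {f g : PreUltra U A} (h : f.val = g.val) : f = g := Subtype.ext h

instance : Norm (PreUltra U A) := ⟨fun f => limUnder (U : Filter I) fun i => ‖f.val i‖⟩

lemma tendsto_norm (f : PreUltra U A) : Tendsto (fun i => ‖f.val i‖) U (𝓝 ‖f‖) := by
  obtain ⟨M, hM⟩ := f.bdd
  exact tendsto_limUnder_ultrafilter U _ (M := M) fun i => by simpa using hM i

lemma norm_eq_of_tendsto {f : PreUltra U A} {r : ℝ}
    (h : Tendsto (fun i => ‖f.val i‖) U (𝓝 r)) : ‖f‖ = r :=
  tendsto_nhds_unique f.tendsto_norm h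

/-- The seminorm `lim_U ‖f i‖`. -/
def seminorm : AddGroupSeminorm (PreUltra U A) where
  toFun f := ‖f‖
  map_zero' := norm_eq_of_tendsto (by simp)
  add_le' f g := le_of_tendsto_of_tendsto' (tendsto_norm (f + g))
    (f.tendsto_norm.add g.tendsto_norm) fun _ => norm_add_le _ _
  neg' f := norm_eq_of_tendsto (by simpa using f.tendsto_norm)

instance : SeminormedRing (PreUltra U A) :=
  { (seminorm (U := U) (A := A)).toSeminormedAddCommGroup,
    (inferInstance : Ring (PreUltra U A)) with
    toNorm := inferInstanceAs (Norm (PreUltra U A))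
    norm_mul_le := fun f g => le_of_tendsto_of_tendsto' (tendsto_norm (f * g))
      (f.tendsto_norm.mul g.tendsto_norm) fun _ => norm_mul_le _ _ }

instance : NormedAlgebra ℂ (PreUltra U A) where
  norm_smul_le c f := le_of_tendsto_of_tendsto' (tendsto_norm (c • f))
      (f.tendsto_norm.const_mul ‖c‖) fun i => norm_smul_le c (f.val i)

lemma norm_star' (f : PreUltra U A) : ‖star f‖ = ‖f‖ :=
  norm_eq_of_tendsto (by simpa using f.tendsto_norm)

lemma norm_star_mul (f : PreUltra U A) : ‖star f * f‖ = ‖f‖ * ‖f‖ :=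
  norm_eq_of_tendsto (by
    simpa [CStarRing.norm_star_mul_self] using f.tendsto_norm.mul f.tendsto_norm)

instance : NormedStarGroup (PreUltra U A) := ⟨fun f => (norm_star' f).le⟩

end PreUltra

/-- The C*-ultrapower of `A` along `U`. -/
abbrev Ultra : Type := SeparationQuotient (PreUltra U A)

namespace Ultra

variable {U A}

/-- The quotient map. -/
abbrev q : PreUltra U A → Ultra U A := SeparationQuotient.mk

lemma norm_q (f : PreUltra U A) : ‖(q f : Ultra U A)‖ = ‖f‖ := rfl

lemma exists_rep (x : Ultra U A) : ∃ f : PreUltra U A, q f = x :=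
  SeparationQuotient.surjective_mk x

instance : Star (Ultra U A) :=
  ⟨SeparationQuotient.lift (fun f => q (star f)) fun f g h => by
    rw [SeparationQuotient.mk_eq_mk]
    exact h.map continuous_star⟩

lemma star_q (f : PreUltra U A) : star (q f : Ultra U A) = q (star f) := rfl

instance : StarRing (Ultra U A) where
  star_involutive x := by
    obtain ⟨f, rfl⟩ := exists_rep x
    simp [star_q]
  star_mul x y := by
    obtain ⟨f, rfl⟩ := exists_rep x
    obtain ⟨g, rfl⟩ := exists_rep y
    simp only [star_q, ← SeparationQuotient.mk_mul, star_mul]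
  star_add x y := by
    obtain ⟨f, rfl⟩ := exists_rep x
    obtain ⟨g, rfl⟩ := exists_rep y
    simp only [star_q, ← SeparationQuotient.mk_add, star_add]

instance : StarModule ℂ (Ultra U A) where
  star_smul c x := by
    obtain ⟨f, rfl⟩ := exists_rep x
    simp only [star_q, ← SeparationQuotient.mk_smul, star_smul]

instance : CStarRing (Ultra U A) where
  norm_mul_self_le x := by
    obtain ⟨f, rfl⟩ := exists_rep x
    exact (PreUltra.norm_star_mul f).ge

/-- Every element of the ultrapower lifts to a family bounded by its norm: truncate any lift. -/
lemma exists_rep_le (x : Ultra U A) : ∃ f : PreUltra U A, q f = x ∧ ∀ i, ‖f.val i‖ ≤ ‖x‖ := by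
  obtain ⟨f, rfl⟩ := exists_rep x
  rw [norm_q]
  set r := ‖f‖ with hr
  have hr0 : 0 ≤ r := norm_nonneg f
  let c : I → ℝ := fun i => r / max r ‖f.val i‖
  have hb : ∀ i, ‖((c i : ℝ) : ℂ) • f.val i‖ ≤ r := by
    intro i
    rw [norm_smul, Complex.norm_real, Real.norm_of_nonneg (by positivity)]
    rcases eq_or_lt_of_le hr0 with h0 | h0
    · simp [c, ← h0]
    · have : 0 < max r ‖f.val i‖ := lt_max_of_lt_left h0
      rw [div_mul_eq_mul_div, div_le_iff₀ this]
      exact mul_le_mul_of_nonneg_left (le_max_right _ _) hr0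
  let g : PreUltra U A := PreUltra.mk U (fun i => ((c i : ℝ) : ℂ) • f.val i) ⟨r, hb⟩
  refine ⟨g, ?_, hb⟩
  rw [← sub_eq_zero, ← norm_eq_zero, ← SeparationQuotient.mk_sub, norm_q]
  rcases eq_or_lt_of_le hr0 with h0 | h0
  · have h1 : ‖g‖ ≤ r := le_of_tendsto' g.tendsto_norm hb
    have h2 := norm_sub_le g f
    have h3 := norm_nonneg (g - f)
    linarith
  · have h1 : Tendsto c U (𝓝 1) := by
      have : Tendsto (fun i => max r ‖f.val i‖) U (𝓝 (max r r)) :=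
        tendsto_const_nhds.max f.tendsto_norm
      rw [max_self] at this
      have h2 := (tendsto_const_nhds (x := r)).div this h0.ne'
      rwa [div_self h0.ne'] at h2
    apply PreUltra.norm_eq_of_tendsto
    have h2 : Tendsto (fun i => |c i - 1| * ‖f.val i‖) U (𝓝 (|1 - 1| * ‖f‖)) :=
      ((h1.sub_const 1).abs).mul f.tendsto_norm
    simp only [sub_self, abs_zero, zero_mul] at h2
    refine h2.congr fun i => ?_
    have : (g - f).val i = (((c i - 1 : ℝ)) : ℂ) • f.val i := by
      simp [g, sub_smul]
    rw [this, norm_smul, Complex.norm_real, Real.norm_eq_abs]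

instance : CompleteSpace (Ultra U A) := by
  apply NormedAddCommGroup.completeSpace_of_summable_imp_tendsto
  intro u hu
  choose f hf hfu using fun n => exists_rep_le (u n)
  have hs : ∀ i, Summable fun n => (f n).val i := fun i =>
    Summable.of_norm_bounded hu fun n => hfu n i
  have hsn : ∀ i, Summable fun n => ‖(f n).val i‖ := fun i =>
    Summable.of_nonneg_of_le (fun _ => norm_nonneg _) (fun n => hfu n i) hu
  let g : PreUltra U A := PreUltra.mk U (fun i => ∑' n, (f n).val i) ⟨∑' n, ‖u n‖, fun i =>
    (norm_tsum_le_tsum_norm (hsn i)).trans ((hsn i).tsum_le_tsum (fun n => hfu n i) hu)⟩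
  refine ⟨q g, ?_⟩
  rw [tendsto_iff_norm_sub_tendsto_zero]
  have htail := tendsto_sum_nat_add fun n => ‖u n‖
  refine squeeze_zero (fun _ => norm_nonneg _) (fun N => ?_) htail
  have h1 : ∑ n ∈ Finset.range N, u n = q (∑ n ∈ Finset.range N, f n) := by
    rw [← Finset.sum_congr rfl fun n _ => hf n]
    exact (map_sum (SeparationQuotient.mkAddMonoidHom (M := PreUltra U A)) _ _).symm
  rw [norm_sub_rev, h1, ← SeparationQuotient.mk_sub, norm_q]
  refine le_of_tendsto' (PreUltra.tendsto_norm _) fun i => ?_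
  have h2 : ∀ s : Finset ℕ, (∑ n ∈ s, f n).val i = ∑ n ∈ s, (f n).val i := by
    classical
    intro s
    induction s using Finset.induction_on with
    | empty => simp
    | insert a s ha ih => simp [Finset.sum_insert ha, ih]
  have h3 : (g - ∑ n ∈ Finset.range N, f n).val i = ∑' n, (f (n + N)).val i := by
    rw [PreUltra.val_sub, Pi.sub_apply, h2]
    change ∑' n, (f n).val i - _ = _
    rw [← (hs i).sum_add_tsum_nat_add N, add_sub_cancel_left]
  rw [h3]
  have h4 : Summable fun n => ‖(f (n + N)).val i‖ := (summable_nat_add_iff N).mpr (hsn i)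
  exact (norm_tsum_le_tsum_norm h4).trans
    (h4.tsum_le_tsum (fun n => hfu _ i) ((summable_nat_add_iff N).mpr hu))

instance : CStarAlgebra (Ultra U A) where

open Classical in
/-- The class of a bounded family (with value `0` on unbounded families). -/
def cls (U : Ultrafilter I) (f : I → A) : Ultra U A :=
  if h : Bdd f then q (PreUltra.mk U f h) else 0

lemma cls_of_bdd {f : I → A} (h : Bdd f) : cls U f = q (PreUltra.mk U f h) := dif_pos h

lemma isCStarUltraproduct : IsCStarUltraproduct U (fun _ => A) (Ultra U A) (cls U) where
  map_one := by
    have h : Bdd (1 : I → A) := (1 : PreUltra U A).bdd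
    rw [cls_of_bdd h]; rfl
  map_add f g hf hg := by
    have h : Bdd (f + g) := (PreUltra.mk U f hf + PreUltra.mk U g hg).bdd
    rw [cls_of_bdd h, cls_of_bdd hf, cls_of_bdd hg]; rfl
  map_mul f g hf hg := by
    have h : Bdd (f * g) := (PreUltra.mk U f hf * PreUltra.mk U g hg).bdd
    rw [cls_of_bdd h, cls_of_bdd hf, cls_of_bdd hg]; rfl
  map_star f hf := by
    have h : Bdd (star f) := (star (PreUltra.mk U f hf)).bdd
    rw [cls_of_bdd h, cls_of_bdd hf]; rfl
  map_smul c f hf := by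
    have h : Bdd (c • f) := (c • (PreUltra.mk U f hf)).bdd
    rw [cls_of_bdd h, cls_of_bdd hf]; rfl
  norm_eq f hf := by
    rw [cls_of_bdd hf, norm_q]
    exact PreUltra.tendsto_norm _
  surj x := by
    obtain ⟨f, rfl, hf⟩ := exists_rep_le x
    exact ⟨f.val, hf, cls_of_bdd f.bdd⟩

end Ultra

end Ultrapower

/-! ### Maps out of an ultrapower -/

lemma Bdd.add {I A : Type} [CStarAlgebra A] {f g : I → A} (hf : Bdd f) (hg : Bdd g) :
    Bdd (f + g) := (bddFam I A).add_mem hf hg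
lemma Bdd.mul {I A : Type} [CStarAlgebra A] {f g : I → A} (hf : Bdd f) (hg : Bdd g) :
    Bdd (f * g) := (bddFam I A).mul_mem hf hg
lemma Bdd.smul {I A : Type} [CStarAlgebra A] {f : I → A} (hf : Bdd f) (c : ℂ) :
    Bdd (c • f) := (bddFam I A).smul_mem hf c
lemma Bdd.star {I A : Type} [CStarAlgebra A] {f : I → A} (hf : Bdd f) :
    Bdd (Star.star f) := (bddFam I A).star_mem' hf
lemma Bdd.const {I A : Type} [CStarAlgebra A] (a : A) : Bdd (fun _ : I => a) := ⟨‖a‖, fun _ => le_rfl⟩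
lemma Bdd.one {I A : Type} [CStarAlgebra A] : Bdd (1 : I → A) := (bddFam I A).one_mem

/-- A *-homomorphism on bounded families that kills the families which vanish in the ultrapower
factors through the ultrapower. -/
lemma exists_ultra_lift {I A B C : Type} [CStarAlgebra A] [CStarAlgebra B] [CStarAlgebra C]
    {U : Ultrafilter I} {π : (I → A) → B} (h : IsCStarUltraproduct U (fun _ => A) B π)
    (Ψ : (I → A) → C) (h1 : Ψ 1 = 1) (hadd : ∀ f g, Bdd f → Bdd g → Ψ (f + g) = Ψ f + Ψ g)
    (hmul : ∀ f g, Bdd f → Bdd g → Ψ (f * g) = Ψ f * Ψ g)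
    (hstar : ∀ f, Bdd f → Ψ (star f) = star (Ψ f))
    (hsmul : ∀ (c : ℂ) f, Bdd f → Ψ (c • f) = c • Ψ f)
    (h0 : ∀ f, Bdd f → Tendsto (fun i => ‖f i‖) U (𝓝 0) → Ψ f = 0) :
    ∃ Φ : B →⋆ₐ[ℂ] C, ∀ f, Bdd f → Φ (π f) = Ψ f := by
  choose r hr hπr using h.surj
  have hrb : ∀ b, Bdd (r b) := fun b => ⟨‖b‖, hr b⟩
  have key : ∀ f g, Bdd f → Bdd g → π f = π g → Ψ f = Ψ g := by
    intro f g hf hg hfg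
    have hd : Bdd (f + (-1 : ℂ) • g) := hf.add (hg.smul _)
    have h2 : Ψ (f + (-1 : ℂ) • g) = 0 := by
      apply h0 _ hd
      have := h.norm_eq _ hd
      rwa [h.map_add _ _ hf (hg.smul _), h.map_smul _ _ hg, hfg, neg_one_smul ℂ (π g),
        add_neg_cancel, norm_zero] at this
    rw [hadd _ _ hf (hg.smul _), hsmul _ _ hg, neg_one_smul ℂ (Ψ g)] at h2
    exact eq_of_sub_eq_zero (by rw [sub_eq_add_neg]; exact h2)
  have main : ∀ f, Bdd f → Ψ (r (π f)) = Ψ f := fun f hf => key _ _ (hrb _) hf (hπr _)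
  refine ⟨{ toFun := fun b => Ψ (r b), map_one' := ?_, map_mul' := ?_, map_zero' := ?_,
            map_add' := ?_, commutes' := ?_, map_star' := ?_ }, fun f hf => main f hf⟩
  · rw [← h1, ← main 1 Bdd.one, h.map_one]
  · intro x y
    change Ψ (r (x * y)) = _
    rw [← hmul _ _ (hrb x) (hrb y), ← main _ ((hrb x).mul (hrb y)),
      h.map_mul _ _ (hrb x) (hrb y), hπr, hπr]
  · apply h0 _ (hrb 0)
    have := h.norm_eq _ (hrb 0)
    rwa [hπr, norm_zero] at this
  · intro x y
    change Ψ (r (x + y)) = _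
    rw [← hadd _ _ (hrb x) (hrb y), ← main _ ((hrb x).add (hrb y)),
      h.map_add _ _ (hrb x) (hrb y), hπr, hπr]
  · intro c
    rw [Algebra.algebraMap_eq_smul_one, Algebra.algebraMap_eq_smul_one]
    change Ψ (r (c • 1)) = _
    rw [← h1, ← hsmul _ _ Bdd.one, ← main _ (Bdd.one.smul c), h.map_smul _ _ Bdd.one, h.map_one]
  · intro x
    rw [← hstar _ (hrb x), ← main _ (hrb x).star, h.map_star _ (hrb x), hπr]

/-! ### The Hilbert space of a tracial state -/

section Completion

open UniformSpace

variable {H : Type} [SeminormedAddCommGroup H] [InnerProductSpace ℂ H]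
  {E : Type} [Ring E] [StarRing E] [Algebra ℂ E] [StarModule ℂ E]

/-- A *-representation by bounded operators on a pre-Hilbert space extends to the completion. -/
def completionRep (φ : E →ₐ[ℂ] (H →L[ℂ] H))
    (hadj : ∀ a x y, inner ℂ (φ a x) y = inner ℂ x (φ (star a) y)) :
    E →⋆ₐ[ℂ] (Completion H →L[ℂ] Completion H) where
  toFun a := (φ a).completion
  map_one' := by
    ext b
    induction b using Completion.induction_on with
    | hp => apply isClosed_eq <;> fun_prop
    | ih b => simp
  map_zero' := by
    ext b
    induction b using Completion.induction_on with
    | hp => apply isClosed_eq <;> fun_prop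
    | ih b => simp [Completion.coe_zero]
  map_add' _ _ := by
    ext c
    induction c using Completion.induction_on with
    | hp => apply isClosed_eq <;> fun_prop
    | ih c => simp [Completion.coe_add]
  map_mul' _ _ := by
    ext c
    induction c using Completion.induction_on with
    | hp => apply isClosed_eq <;> fun_prop
    | ih c => simp
  commutes' r := by
    ext c
    induction c using Completion.induction_on with
    | hp => apply isClosed_eq <;> fun_prop
    | ih c => simp [Algebra.algebraMap_eq_smul_one]
  map_star' a := by
    refine (ContinuousLinearMap.eq_adjoint_iff (φ (star a)).completion (φ a).completion).mpr ?_
    intro x y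
    induction x, y using Completion.induction_on₂ with
    | hp => apply isClosed_eq <;> fun_prop
    | ih x y =>
      have := hadj (star a) x y
      rw [star_star] at this
      simpa using this

omit [StarModule ℂ E] in
lemma completionRep_coe (φ : E →ₐ[ℂ] (H →L[ℂ] H))
    (hadj : ∀ a x y, inner ℂ (φ a x) y = inner ℂ x (φ (star a) y)) (a : E) (x : H) :
    completionRep φ hadj a (x : Completion H) = (φ a x : H) := by
  simp [completionRep]

end Completion

/-- A tracial state on a *-algebra, with a bound function which controls left multiplications in
the associated `L²`-seminorm. -/
structure TrState (E : Type) [Ring E] [StarRing E] [Algebra ℂ E] [StarModule ℂ E] where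
  /-- The trace. -/
  τ : E →ₗ[ℂ] ℂ
  τ_star : ∀ x, τ (star x) = star (τ x)
  τ_pos : ∀ x, 0 ≤ (τ (star x * x)).re
  τ_comm : ∀ x y, τ (x * y) = τ (y * x)
  bdd : ∀ y, ∃ C : ℝ, 0 ≤ C ∧ ∀ x, (τ (star (y * x) * (y * x))).re ≤ C ^ 2 * (τ (star x * x)).re

namespace TrState

variable {E : Type} [Ring E] [StarRing E] [Algebra ℂ E] [StarModule ℂ E]

/-- The algebra itself, with the `L²`-seminorm of the trace. -/
def Pre (_t : TrState E) : Type := E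

variable (t : TrState E)

instance : AddCommGroup t.Pre := inferInstanceAs (AddCommGroup E)
instance : Module ℂ t.Pre := inferInstanceAs (Module ℂ E)

/-- The identity map into the pre-Hilbert space. -/
def toPre : E ≃ₗ[ℂ] t.Pre := LinearEquiv.refl ℂ E

/-- The pre-inner product `τ (x* y)`. -/
abbrev preCore : PreInnerProductSpace.Core ℂ t.Pre where
  inner x y := t.τ (star (t.toPre.symm x) * t.toPre.symm y)
  conj_inner_symm x y := by
    have := t.τ_star (star (t.toPre.symm y) * t.toPre.symm x)
    rw [star_mul, star_star] at this
    exact this.symm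
  re_inner_nonneg x := t.τ_pos _
  add_left _ _ _ := by rw [map_add, star_add, add_mul, map_add]
  smul_left _ _ _ := by simp

instance : SeminormedAddCommGroup t.Pre :=
  InnerProductSpace.Core.toSeminormedAddCommGroup (c := t.preCore)
instance : InnerProductSpace ℂ t.Pre := InnerProductSpace.ofCore t.preCore

lemma inner_toPre (x y : E) : inner ℂ (t.toPre x) (t.toPre y) = t.τ (star x * y) := rfl

lemma norm_toPre_sq (x : E) : ‖t.toPre x‖ ^ 2 = (t.τ (star x * x)).re := by
  rw [← inner_toPre, ← inner_self_eq_norm_sq (𝕜 := ℂ)]; rfl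

lemma norm_le_of_sq {x y : E} {C : ℝ} (hC : 0 ≤ C)
    (h : (t.τ (star y * y)).re ≤ C ^ 2 * (t.τ (star x * x)).re) :
    ‖t.toPre y‖ ≤ C * ‖t.toPre x‖ := by
  rw [← sq_le_sq₀ (norm_nonneg _) (mul_nonneg hC (norm_nonneg _)), mul_pow, norm_toPre_sq,
    norm_toPre_sq]
  exact h

/-- In a tracial `L²`-space, right multiplication by `y` is bounded by any bound for left
multiplication by `y*`. -/
lemma norm_toPre_mul_le {y : E} {C : ℝ} (hC : 0 ≤ C)
    (h : ∀ x, (t.τ (star (star y * x) * (star y * x))).re ≤ C ^ 2 * (t.τ (star x * x)).re) (x : E) :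
    ‖t.toPre (x * y)‖ ≤ C * ‖t.toPre x‖ := by
  apply t.norm_le_of_sq hC
  have h1 := h (star x)
  rw [star_star x, t.τ_comm x (star x)] at h1
  rw [← star_mul, star_star, t.τ_comm] at h1
  exact h1

/-- Left multiplication. -/
def lmul : E →ₐ[ℂ] (t.Pre →L[ℂ] t.Pre) where
  toFun y := LinearMap.mkContinuousOfExistsBound
    (t.toPre.toLinearMap ∘ₗ LinearMap.mulLeft ℂ y ∘ₗ t.toPre.symm.toLinearMap) (by
      obtain ⟨C, hC, h⟩ := t.bdd y
      exact ⟨C, fun x => t.norm_le_of_sq hC (h (t.toPre.symm x))⟩)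
  map_one' := by ext x; exact one_mul (M := E) x
  map_zero' := by ext x; exact zero_mul (M₀ := E) x
  map_add' a b := by ext x; exact add_mul (R := E) a b x
  map_mul' a b := by ext x; exact mul_assoc (G := E) a b x
  commutes' c := by
    ext x
    exact (Algebra.smul_def (A := E) c x).symm

lemma lmul_toPre (y x : E) : t.lmul y (t.toPre x) = t.toPre (y * x) := rfl

/-- Right multiplication. -/
def rmul : Eᵐᵒᵖ →ₐ[ℂ] (t.Pre →L[ℂ] t.Pre) where
  toFun y := LinearMap.mkContinuousOfExistsBound
    (t.toPre.toLinearMap ∘ₗ LinearMap.mulRight ℂ y.unop ∘ₗ t.toPre.symm.toLinearMap) (by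
      obtain ⟨C, hC, h⟩ := t.bdd (star y.unop)
      exact ⟨C, fun x => t.norm_toPre_mul_le hC h (t.toPre.symm x)⟩)
  map_one' := by ext x; exact mul_one (M := E) x
  map_zero' := by ext x; exact mul_zero (M₀ := E) x
  map_add' a b := by ext x; exact mul_add (R := E) x a.unop b.unop
  map_mul' a b := by ext x; exact (mul_assoc (G := E) x b.unop a.unop).symm
  commutes' c := by
    ext x
    exact ((Algebra.smul_def (A := E) c x).trans (Algebra.commutes (A := E) c x)).symm

lemma rmul_toPre (y x : E) : t.rmul (MulOpposite.op y) (t.toPre x) = t.toPre (x * y) := rfl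

/-- The Hilbert space of the trace. -/
abbrev Hil : Type := UniformSpace.Completion t.Pre

/-- The canonical map into the Hilbert space of the trace. -/
def ι (x : E) : t.Hil := (t.toPre x : t.Pre)

lemma inner_ι (x y : E) : inner ℂ (t.ι x) (t.ι y) = t.τ (star x * y) := by
  rw [ι, ι, UniformSpace.Completion.inner_coe, inner_toPre]

lemma norm_ι (x : E) : ‖t.ι x‖ = ‖t.toPre x‖ := UniformSpace.Completion.norm_coe _

lemma denseRange_ι : DenseRange t.ι :=
  UniformSpace.Completion.denseRange_coe.comp t.toPre.surjective.denseRange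
    (UniformSpace.Completion.continuous_coe _)

lemma ι_add (x y : E) : t.ι (x + y) = t.ι x + t.ι y := by
  simp [ι, UniformSpace.Completion.coe_add]

/-- The left regular representation. -/
def L : E →⋆ₐ[ℂ] (t.Hil →L[ℂ] t.Hil) := completionRep t.lmul (by
  intro a x y
  obtain ⟨x, rfl⟩ := t.toPre.surjective x
  obtain ⟨y, rfl⟩ := t.toPre.surjective y
  rw [lmul_toPre, lmul_toPre, inner_toPre, inner_toPre, star_mul, mul_assoc])

/-- The right regular representation, as a representation of the opposite algebra. -/
def R : Eᵐᵒᵖ →⋆ₐ[ℂ] (t.Hil →L[ℂ] t.Hil) := completionRep t.rmul (by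
  intro a x y
  obtain ⟨x, rfl⟩ := t.toPre.surjective x
  obtain ⟨y, rfl⟩ := t.toPre.surjective y
  obtain ⟨a, rfl⟩ := MulOpposite.op_surjective a
  rw [← MulOpposite.op_star, rmul_toPre, rmul_toPre, inner_toPre, inner_toPre, star_mul, t.τ_comm,
    ← mul_assoc, t.τ_comm])

lemma L_ι (y x : E) : t.L y (t.ι x) = t.ι (y * x) := completionRep_coe _ _ _ _

lemma R_ι (y x : E) : t.R (MulOpposite.op y) (t.ι x) = t.ι (x * y) := completionRep_coe _ _ _ _

lemma L_R_commute (x : E) (y : Eᵐᵒᵖ) : Commute (t.L x) (t.R y) := by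
  obtain ⟨y, rfl⟩ := MulOpposite.op_surjective y
  apply ContinuousLinearMap.ext
  refine congrFun (t.denseRange_ι.equalizer (by fun_prop) (by fun_prop) ?_)
  funext z
  simp [L_ι, R_ι, mul_assoc]

lemma norm_R_le {y : E} {C : ℝ} (hC : 0 ≤ C)
    (h : ∀ x, (t.τ (star (star y * x) * (star y * x))).re ≤ C ^ 2 * (t.τ (star x * x)).re) :
    ‖t.R (MulOpposite.op y)‖ ≤ C := by
  refine ContinuousLinearMap.opNorm_le_bound _ hC fun z => ?_
  refine t.denseRange_ι.induction_on (p := fun z => ‖t.R (MulOpposite.op y) z‖ ≤ C * ‖z‖) z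
    (isClosed_le (by fun_prop) (by fun_prop)) fun x => ?_
  rw [R_ι, norm_ι, norm_ι]
  exact t.norm_toPre_mul_le hC h x

end TrState

/-! ### Matrix algebras with their normalized traces -/

/-- The operator inequality `x* y* y x ≤ ‖y‖² x* x`, with an explicit square root of the difference. -/
lemma exists_star_mul_self_eq {A : Type} [CStarAlgebra A] (y x : A) :
    ∃ w : A, ((‖y‖ * ‖y‖ : ℝ) : ℂ) • (star x * x) - star x * (star y * y) * x = star w * w := by
  let _ : PartialOrder A := CStarAlgebra.spectralOrder _
  have _ : StarOrderedRing A := CStarAlgebra.spectralOrderedRing _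
  have h1 : star x * (star y * y) * x ≤ ‖star y * y‖ • (star x * x) :=
    CStarAlgebra.star_left_conjugate_le_norm_smul
  rw [CStarRing.norm_star_mul_self, ← Complex.coe_smul] at h1
  exact CStarAlgebra.nonneg_iff_eq_star_mul_self.mp (sub_nonneg.mpr h1)

section MatrixTrace

open scoped ComplexOrder

/-- The C*-algebra of complex matrices indexed by a finite type. -/
abbrev Mat (G : Type) [Fintype G] [DecidableEq G] : Type := CStarMatrix G G ℂ

variable {G : Type} [Fintype G] [DecidableEq G]

instance : CStarAlgebra (Mat G)ᵐᵒᵖ where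

/-- The transpose of a matrix. -/
def tr (x : Mat G) : Mat G := CStarMatrix.transpose x

lemma tr_add (x y : Mat G) : tr (x + y) = tr x + tr y := rfl
lemma tr_smul (c : ℂ) (x : Mat G) : tr (c • x) = c • tr x := rfl
lemma tr_star (x : Mat G) : tr (star x) = star (tr x) := rfl
lemma tr_mul (x y : Mat G) : tr (x * y) = tr y * tr x := Matrix.transpose_mul (m := G) (n := G) x y
lemma tr_one : tr (1 : Mat G) = 1 := Matrix.transpose_one (n := G)

/-- The transposition as a *-homomorphism into the opposite algebra. -/
def trHom : Mat G →⋆ₐ[ℂ] (Mat G)ᵐᵒᵖ where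
  toFun x := MulOpposite.op (tr x)
  map_one' := by rw [tr_one]; rfl
  map_mul' x y := by rw [tr_mul]; rfl
  map_zero' := rfl
  map_add' x y := rfl
  commutes' c := by
    rw [Algebra.algebraMap_eq_smul_one, tr_smul, tr_one, Algebra.algebraMap_eq_smul_one]; rfl
  map_star' x := rfl

lemma norm_tr_le (x : Mat G) : ‖tr x‖ ≤ ‖x‖ := NonUnitalStarAlgHom.norm_apply_le (trHom (G := G)) x

/-- The normalized trace. -/
def ntr : Mat G →ₗ[ℂ] ℂ := (Fintype.card G : ℂ)⁻¹ • (Matrix.traceLinearMap G ℂ ℂ)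

lemma ntr_apply (x : Mat G) : ntr x = (Fintype.card G : ℂ)⁻¹ * ∑ s, x s s := rfl

lemma ntr_star (x : Mat G) : ntr (star x) = star (ntr x) := by
  simp [ntr_apply, CStarMatrix.star_apply]

lemma ntr_comm (x y : Mat G) : ntr (x * y) = ntr (y * x) := by
  have := Matrix.trace_mul_comm (m := G) (n := G) (R := ℂ) x y
  exact congrArg ((Fintype.card G : ℂ)⁻¹ * ·) this

lemma ntr_pos (x : Mat G) : 0 ≤ (ntr (star x * x)).re := by
  have : ntr (star x * x) = (((Fintype.card G : ℝ)⁻¹ * ∑ s, ∑ t, ‖x t s‖ ^ 2 : ℝ) : ℂ) := by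
    rw [ntr_apply]
    push_cast
    congr 1
    refine Finset.sum_congr rfl fun s _ => ?_
    rw [CStarMatrix.mul_apply]
    refine Finset.sum_congr rfl fun t _ => ?_
    rw [CStarMatrix.star_apply, Complex.star_def, Complex.conj_mul']
  rw [this, Complex.ofReal_re]
  positivity

lemma norm_ntr_le [Nonempty G] (x : Mat G) : ‖ntr x‖ ≤ ‖x‖ := by
  rw [ntr_apply, norm_mul, norm_inv, Complex.norm_natCast]
  have h : ‖∑ s, x s s‖ ≤ Fintype.card G * ‖x‖ := by
    refine (norm_sum_le _ _).trans ?_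
    refine (Finset.sum_le_sum fun s _ => CStarMatrix.norm_entry_le_norm).trans ?_
    simp
  have h2 : (0 : ℝ) < Fintype.card G := by exact_mod_cast Fintype.card_pos
  rw [inv_mul_le_iff₀ h2]
  exact h

lemma ntr_mul_le (y x : Mat G) :
    (ntr (star (y * x) * (y * x))).re ≤ ‖y‖ ^ 2 * (ntr (star x * x)).re := by
  obtain ⟨w, hw⟩ := exists_star_mul_self_eq y x
  have h2 := ntr_pos w
  rw [← hw, map_sub] at h2
  rw [map_smul, smul_eq_mul, Complex.sub_re, Complex.re_ofReal_mul] at h2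
  rw [star_mul, mul_assoc, ← mul_assoc (star y), ← mul_assoc (star x), sq]
  linarith

end MatrixTrace

section Regular

open scoped ComplexOrder

variable {Γ : Type} [Fintype Γ] [DecidableEq Γ] [Group Γ]

/-- The left regular representation of a finite group, by permutation matrices. -/
def lreg : Γ →* Mat Γ where
  toFun σ := CStarMatrix.ofMatrix fun t s => if t = σ * s then 1 else 0
  map_one' := by
    ext t s
    change (if t = 1 * s then (1 : ℂ) else 0) = _
    simp [CStarMatrix.one_apply]
  map_mul' σ τ := by
    ext t s
    rw [CStarMatrix.mul_apply]
    change (if t = σ * τ * s then (1 : ℂ) else 0) =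
      ∑ r, (if t = σ * r then (1 : ℂ) else 0) * (if r = τ * s then (1 : ℂ) else 0)
    simp [mul_assoc]

lemma lreg_apply (σ t s : Γ) : (lreg σ : Mat Γ) t s = if t = σ * s then 1 else 0 := rfl

lemma star_lreg (σ : Γ) : star (lreg σ : Mat Γ) = lreg σ⁻¹ := by
  ext t s
  rw [CStarMatrix.star_apply, lreg_apply, lreg_apply]
  have : s = σ * t ↔ t = σ⁻¹ * s := by rw [eq_inv_mul_iff_mul_eq, eq_comm]
  simp [this, apply_ite]

lemma tr_lreg (σ : Γ) : tr (lreg σ : Mat Γ) = lreg σ⁻¹ := by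
  ext t s
  change (lreg σ : Mat Γ) s t = _
  rw [lreg_apply, lreg_apply]
  have : s = σ * t ↔ t = σ⁻¹ * s := by rw [eq_inv_mul_iff_mul_eq, eq_comm]
  simp [this]

lemma norm_lreg_le (σ : Γ) : ‖(lreg σ : Mat Γ)‖ ≤ 1 := by
  have h1 : star (lreg σ : Mat Γ) * lreg σ = 1 := by rw [star_lreg, ← map_mul]; simp
  have h2 := CStarRing.norm_star_mul_self (x := (lreg σ : Mat Γ))
  rw [h1, CStarRing.norm_one] at h2
  nlinarith [norm_nonneg (lreg σ : Mat Γ)]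

lemma ntr_lreg (σ : Γ) : ntr (lreg σ : Mat Γ) = if σ = 1 then 1 else 0 := by
  rw [ntr_apply]
  simp only [lreg_apply]
  have : ∀ s : Γ, (s = σ * s) ↔ σ = 1 := fun s => by rw [eq_comm, mul_eq_right]
  simp only [this]
  split_ifs
  · simp
  · simp

end Regular

/-! ### A matricial ultraproduct containing the free group -/

namespace TrState

variable {E : Type} [Ring E] [StarRing E] [Algebra ℂ E] [StarModule ℂ E] (t : TrState E)
  (u : FG →* E) (hstar : ∀ w, star (u w) = u w⁻¹) (hτ : ∀ w, t.τ (u w) = if w = 1 then 1 else 0)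

include hstar hτ

/-- If the trace restricts to the canonical trace of the free group, the group elements are
orthonormal. -/
lemma orthonormal_ι : Orthonormal ℂ fun w : FG => t.ι (u w) := by
  rw [orthonormal_iff_ite]
  intro v w
  rw [inner_ι, hstar, ← map_mul, hτ]
  simp only [inv_mul_eq_one]

/-- On the vectors `ι b`, left translations behave, up to a constant depending on `b`, as in the
regular representation of the free group. -/
lemma norm_sum_L_le (f : FG →₀ ℝ) (b : E) :
    ‖∑ w ∈ f.support, (f w : ℂ) • t.L (u w) (t.ι b)‖ ≤
      ‖t.R (MulOpposite.op b)‖ * √(l2 f) := by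
  have h1 : ∑ w ∈ f.support, (f w : ℂ) • t.L (u w) (t.ι b) =
      t.R (MulOpposite.op b) (∑ w ∈ f.support, (f w : ℂ) • t.ι (u w)) := by
    rw [map_sum]
    refine Finset.sum_congr rfl fun w _ => ?_
    rw [map_smul, L_ι, R_ι]
  have h2 : ‖∑ w ∈ f.support, (f w : ℂ) • t.ι (u w)‖ = √(l2 f) := by
    rw [eq_comm, Real.sqrt_eq_iff_mul_self_eq (l2_nonneg f) (norm_nonneg _), ← sq]
    have := (t.orthonormal_ι u hstar hτ).inner_sum (fun w => (f w : ℂ)) (fun w => (f w : ℂ))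
      f.support
    rw [inner_self_eq_norm_sq_to_K] at this
    simp only [Complex.conj_ofReal] at this
    rw [l2]
    have h3 : ((‖∑ w ∈ f.support, (f w : ℂ) • t.ι (u w)‖ ^ 2 : ℝ) : ℂ) =
        ((∑ w ∈ f.support, f w ^ 2 : ℝ) : ℂ) := by
      push_cast
      simp only [sq (_ : ℂ)] at this ⊢
      exact this
    exact (Complex.ofReal_injective h3).symm
  rw [h1, ← h2]
  exact ContinuousLinearMap.le_opNorm _ _

end TrState

section Model

open scoped ComplexOrder

/-- The finite quotient of the free group used at the index `J`. -/
abbrev GJ (J : Finset ℕ) : Type := Equiv.Perm (FBall J.card)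

/-- The *-algebra of bounded families of matrices. -/
def Fam : StarSubalgebra ℂ (∀ J : Finset ℕ, Mat (GJ J)) where
  carrier := {f | Bdd f}
  mul_mem' := by
    rintro f g ⟨M, hM⟩ ⟨N, hN⟩
    exact ⟨M * N, fun i => (norm_mul_le _ _).trans
      (mul_le_mul (hM i) (hN i) (norm_nonneg _) ((norm_nonneg _).trans (hM i)))⟩
  add_mem' := by
    rintro f g ⟨M, hM⟩ ⟨N, hN⟩
    exact ⟨M + N, fun i => (norm_add_le _ _).trans (add_le_add (hM i) (hN i))⟩
  algebraMap_mem' c := ⟨‖c‖, fun i => by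
    change ‖algebraMap ℂ (Mat (GJ i)) c‖ ≤ ‖c‖
    rw [norm_algebraMap']⟩
  star_mem' := by
    rintro f ⟨M, hM⟩
    exact ⟨M, fun i => by
      exact (norm_star (f i)).le.trans (hM i)⟩

namespace Fam

variable (U : Ultrafilter (Finset ℕ))

lemma tendsto_ntr (x : Fam) : Tendsto (fun J => ntr (x.1 J)) (U : Filter (Finset ℕ))
    (𝓝 (limUnder (U : Filter (Finset ℕ)) fun J => ntr (x.1 J))) := by
  obtain ⟨M, hM⟩ := x.2
  exact tendsto_limUnder_ultrafilter U _ (M := M) fun J => (norm_ntr_le _).trans (hM J)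

/-- The limit of the normalized traces. -/
def tau : Fam →ₗ[ℂ] ℂ where
  toFun x := limUnder (U : Filter (Finset ℕ)) fun J => ntr (x.1 J)
  map_add' x y := tendsto_nhds_unique (tendsto_ntr U (x + y))
    (by
      have := (tendsto_ntr U x).add (tendsto_ntr U y)
      refine this.congr fun J => ?_
      rw [← map_add]; rfl)
  map_smul' c x := tendsto_nhds_unique (tendsto_ntr U (c • x))
    (by
      have := (tendsto_ntr U x).const_mul c
      refine this.congr fun J => ?_
      rw [← smul_eq_mul, ← map_smul]; rfl)

lemma tendsto_tau (x : Fam) : Tendsto (fun J => ntr (x.1 J)) (U : Filter (Finset ℕ))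
    (𝓝 (tau U x)) := tendsto_ntr U x

lemma tau_eq {x : Fam} {c : ℂ} (h : Tendsto (fun J => ntr (x.1 J)) (U : Filter (Finset ℕ)) (𝓝 c)) :
    tau U x = c := tendsto_nhds_unique (tendsto_tau U x) h

lemma tau_mul_le {y : Fam} {C : ℝ} (h : ∀ᶠ J in (U : Filter (Finset ℕ)), ‖y.1 J‖ ≤ C) (x : Fam) :
    (tau U (star (y * x) * (y * x))).re ≤ C ^ 2 * (tau U (star x * x)).re := by
  refine le_of_tendsto_of_tendsto
    ((Complex.continuous_re.tendsto _).comp (tendsto_tau U (star (y * x) * (y * x))))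
    (((Complex.continuous_re.tendsto _).comp (tendsto_tau U (star x * x))).const_mul (C ^ 2)) ?_
  filter_upwards [h] with J hJ
  refine (ntr_mul_le (y.1 J) (x.1 J)).trans ?_
  exact mul_le_mul_of_nonneg_right (pow_le_pow_left₀ (norm_nonneg _) hJ 2) (ntr_pos _)

/-- The tracial state given by the limit of the normalized traces. -/
def trState : TrState Fam where
  τ := tau U
  τ_star x := tau_eq U (by
    refine (((tendsto_tau U x).star).congr fun J => ?_)
    exact (ntr_star _).symm)
  τ_pos x := ge_of_tendsto' ((Complex.continuous_re.tendsto _).comp (tendsto_tau U (star x * x)))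
    fun J => ntr_pos (x.1 J)
  τ_comm x y := tau_eq U (by
    refine (tendsto_tau U (y * x)).congr fun J => ?_
    exact ntr_comm _ _)
  bdd y := by
    obtain ⟨M, hM⟩ := y.2
    exact ⟨M, (norm_nonneg _).trans (hM ∅), tau_mul_le U (Eventually.of_forall hM)⟩

/-- The Hilbert space of the limit trace. -/
abbrev K : Type := (trState U).Hil

/-- The canonical embedding of the free group into the matricial ultraproduct. -/
def uu : FG →* Fam where
  toFun w := ⟨fun J => lreg (ballHom J.card w), 1, fun J => norm_lreg_le _⟩
  map_one' := Subtype.ext (by ext1 J; simp)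
  map_mul' v w := Subtype.ext (by ext1 J; simp)

lemma star_uu (w : FG) : star (uu w) = uu w⁻¹ :=
  Subtype.ext (by
    ext1 J
    change star (lreg (ballHom J.card w)) = lreg (ballHom J.card w⁻¹)
    rw [star_lreg, map_inv (ballHom _)])

/-- Entrywise transposition. -/
def trFam : Fam →⋆ₐ[ℂ] Famᵐᵒᵖ where
  toFun x := MulOpposite.op ⟨fun J => tr (x.1 J), by
    obtain ⟨M, hM⟩ := x.2
    exact ⟨M, fun J => (norm_tr_le _).trans (hM J)⟩⟩
  map_one' := MulOpposite.unop_injective (Subtype.ext (funext fun J => tr_one))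
  map_mul' x y := MulOpposite.unop_injective (Subtype.ext (funext fun J => tr_mul _ _))
  map_zero' := rfl
  map_add' x y := rfl
  commutes' c := MulOpposite.unop_injective (Subtype.ext (funext fun J => by
    change tr (algebraMap ℂ (Mat (GJ J)) c) = algebraMap ℂ (Mat (GJ J)) c
    rw [Algebra.algebraMap_eq_smul_one, tr_smul, tr_one]))
  map_star' x := rfl

lemma trFam_uu (w : FG) : trFam (uu w) = MulOpposite.op (uu w⁻¹) :=
  MulOpposite.unop_injective (Subtype.ext (funext fun J => by
    change tr (lreg (ballHom J.card w)) = lreg (ballHom J.card w⁻¹)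
    rw [tr_lreg, map_inv (ballHom _)]))

/-- The representation of the matricial ultraproduct on the Hilbert space of its trace which
commutes with the left regular one: right multiplication by the transpose. -/
def rho : Fam →⋆ₐ[ℂ] (K U →L[ℂ] K U) := (trState U).R.comp trFam

lemma norm_rho_le {y : Fam} {C : ℝ} (hC : 0 ≤ C)
    (h : ∀ᶠ J in (U : Filter (Finset ℕ)), ‖y.1 J‖ ≤ C) : ‖rho U y‖ ≤ C := by
  refine (trState U).norm_R_le hC (y := (trFam y).unop) (tau_mul_le U ?_)
  filter_upwards [h] with J hJ
  exact (norm_star (tr (y.1 J))).le.trans ((norm_tr_le _).trans hJ)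

lemma L_rho_commute (x y : Fam) : Commute ((trState U).L x) (rho U y) :=
  (trState U).L_R_commute _ _

/-- The vacuum vector is fixed by the diagonal action of the free group. -/
lemma L_rho_uu_ι_one (w : FG) :
    ((trState U).L (uu w)) (rho U (uu w) ((trState U).ι 1)) = (trState U).ι 1 := by
  have h1 : rho U (uu w) = (trState U).R (MulOpposite.op (uu w⁻¹)) :=
    congrArg (trState U).R (trFam_uu w)
  have h2 : uu w * (1 * uu w⁻¹) = 1 := by
    rw [one_mul, ← map_mul, mul_inv_cancel, map_one]
  have h3 := (trState U).R_ι (uu w⁻¹) 1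
  have h4 := (trState U).L_ι (uu w) (1 * uu w⁻¹)
  have h5 : rho U (uu w) ((trState U).ι 1) = (trState U).ι (1 * uu w⁻¹) := by
    exact (congrArg (fun T : K U →L[ℂ] K U => T ((trState U).ι 1)) h1).trans h3
  have h6 : (trState U).ι (uu w * (1 * uu w⁻¹)) = (trState U).ι 1 := by rw [h2]
  exact ((congrArg ((trState U).L (uu w)) h5).trans h4).trans h6

lemma norm_ι_one : ‖(trState U).ι 1‖ = 1 := by
  have h : (tau U (star (1 : Fam) * 1)) = 1 := tau_eq U (by
    have : ∀ J : Finset ℕ, ntr ((star (1 : Fam) * 1 : Fam).1 J) = 1 := fun J => by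
      have h1 : ((star (1 : Fam) * 1 : Fam).1 J) = lreg (1 : GJ J) := by
        rw [map_one, star_one, mul_one]; rfl
      rw [h1, ntr_lreg, if_pos rfl]
    simp only [this]
    exact tendsto_const_nhds)
  have h2 := (trState U).norm_toPre_sq 1
  rw [← TrState.norm_ι] at h2
  have h3 : (trState U).τ (star (1 : Fam) * 1) = 1 := h
  rw [h3, Complex.one_re] at h2
  nlinarith [norm_nonneg ((trState U).ι 1)]

variable {U} (hU : ∀ n : ℕ, ∀ᶠ J in (U : Filter (Finset ℕ)), n ≤ J.card)
include hU

lemma tau_uu (w : FG) : tau U (uu w) = if w = 1 then 1 else 0 := by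
  apply tau_eq
  refine tendsto_nhds_of_eventually_eq ?_
  filter_upwards [hU w.norm] with J hJ
  change ntr (lreg (ballHom J.card w)) = _
  rw [ntr_lreg]
  by_cases hw : w = 1
  · simp [hw]
  · rw [if_neg hw, if_neg fun h => hw (ballHom_eq_one _ w hJ h)]

lemma norm_sum_L_le (f : FG →₀ ℝ) (b : Fam) :
    ‖∑ w ∈ f.support, (f w : ℂ) • (trState U).L (uu w) ((trState U).ι b)‖ ≤
      ‖(trState U).R (MulOpposite.op b)‖ * √(l2 f) :=
  (trState U).norm_sum_L_le uu star_uu (tau_uu hU) f b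

end Fam

end Model

/-! ### The norm of the adjacency operator -/

section PowerGrowth

variable {H : Type} [NormedAddCommGroup H] [InnerProductSpace ℂ H] [CompleteSpace H]

/-- For a self-adjoint operator the norms `‖X ^ m ζ‖` are logarithmically convex in `m`, hence their
exponential growth rate bounds `‖X ζ‖ / ‖ζ‖`. -/
lemma norm_apply_le_of_growth {X : H →L[ℂ] H} (hX : IsSelfAdjoint X) {r C : ℝ} (hr : 0 < r) (ζ : H)
    (h : ∀ m : ℕ, ‖(X ^ m) ζ‖ ≤ C * r ^ m) : ‖X ζ‖ ≤ r * ‖ζ‖ := by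
  set a : ℕ → ℝ := fun m => ‖(X ^ m) ζ‖ with ha
  have ha0 : a 0 = ‖ζ‖ := by simp [ha]
  have ha1 : a 1 = ‖X ζ‖ := by simp [ha]
  have hlog : ∀ m, a (m + 1) ^ 2 ≤ a m * a (m + 2) := by
    intro m
    have h1 : inner ℂ ((X ^ (m + 1)) ζ) ((X ^ (m + 1)) ζ) =
        inner ℂ ((X ^ m) ζ) ((X ^ (m + 2)) ζ) := by
      have e1 : (X ^ (m + 1)) ζ = X ((X ^ m) ζ) := by rw [pow_succ']; rfl
      have e2 : (X ^ (m + 2)) ζ = X ((X ^ (m + 1)) ζ) := by rw [pow_succ']; rfl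
      rw [e2]
      conv_lhs => rw [show inner ℂ ((X ^ (m + 1)) ζ) ((X ^ (m + 1)) ζ) =
        inner ℂ (X ((X ^ m) ζ)) ((X ^ (m + 1)) ζ) by rw [← e1]]
      rw [← ContinuousLinearMap.adjoint_inner_right, ← ContinuousLinearMap.star_eq_adjoint, hX.star_eq]
    have h2 := inner_self_eq_norm_sq_to_K (𝕜 := ℂ) ((X ^ (m + 1)) ζ)
    rw [h1] at h2
    have h3 : ‖(X ^ (m + 1)) ζ‖ ^ 2 = ‖inner ℂ ((X ^ m) ζ) ((X ^ (m + 2)) ζ)‖ := by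
      rw [h2]; simp
    simp only [ha]
    rw [h3]
    exact norm_inner_le_norm _ _
  rw [← ha0, ← ha1]
  by_contra! hlt
  have hpos0 : 0 < a 0 := by
    rcases (norm_nonneg ζ).eq_or_lt with h0 | h0
    · have hζ : ζ = 0 := norm_eq_zero.mp h0.symm
      rw [ha0, ha1, hζ] at hlt
      simp at hlt
    · rwa [ha0]
  set q := a 1 / a 0 with hq
  have hqr : r < q := by rw [hq, lt_div_iff₀ hpos0]; exact hlt
  have hq0 : 0 < q := hr.trans hqr
  have step : ∀ m, 0 < a m ∧ q * a m ≤ a (m + 1) := by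
    intro m
    induction m with
    | zero => exact ⟨hpos0, by rw [hq]; field_simp; simp⟩
    | succ m ih =>
      obtain ⟨h1, h2⟩ := ih
      have h3 : 0 < a (m + 1) := (mul_pos hq0 h1).trans_le h2
      refine ⟨h3, ?_⟩
      have h4 := hlog m
      have h5 : a m * (q * a (m + 1)) ≤ a m * a (m + 2) := by nlinarith
      exact le_of_mul_le_mul_left h5 h1
  have hgrow : ∀ m, q ^ m * a 0 ≤ a m := by
    intro m
    induction m with
    | zero => simp
    | succ m ih =>
      calc q ^ (m + 1) * a 0 = q * (q ^ m * a 0) := by ring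
        _ ≤ q * a m := by gcongr
        _ ≤ a (m + 1) := (step m).2
  obtain ⟨m, hm⟩ := pow_unbounded_of_one_lt (C / a 0) ((one_lt_div hr).mpr hqr)
  have h1 := (hgrow m).trans (h m)
  rw [div_lt_iff₀ hpos0, div_pow, div_mul_eq_mul_div, lt_div_iff₀ (by positivity)] at hm
  linarith

end PowerGrowth

section Amplification

variable {Γ : Type} [Fintype Γ] [DecidableEq Γ] {D : Type} [CStarAlgebra D] [PartialOrder D]
  [StarOrderedRing D] {K : Type} [NormedAddCommGroup K] [InnerProductSpace ℂ K] [CompleteSpace K]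

/-- The amplification of a representation of `D` on `K` to matrices over `D`. -/
def ampl (ψ : D →⋆ₐ[ℂ] (K →L[ℂ] K)) :
    CStarMatrix Γ Γ D →⋆ₐ[ℂ] (PiLp 2 (fun _ : Γ => K) →L[ℂ] PiLp 2 (fun _ : Γ => K)) where
  toFun M := ((PiLp.continuousLinearEquiv 2 ℂ (fun _ : Γ => K)).symm :
      (Γ → K) →L[ℂ] PiLp 2 (fun _ : Γ => K)) ∘L
    ContinuousLinearMap.pi (fun t => ∑ s, ψ (M t s) ∘L PiLp.proj 2 (fun _ : Γ => K) s)
  map_one' := by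
    ext x t
    have : ∀ i, (if t = i then (1 : K →L[ℂ] K) else 0) (x.ofLp i) = if t = i then x.ofLp i else 0 :=
      fun i => by split_ifs <;> simp
    simp [CStarMatrix.one_apply, apply_ite ψ, this]
  map_mul' M N := by
    ext x t
    simp only [CStarMatrix.mul_apply, map_sum, map_mul]
    simp
    exact Finset.sum_comm
  map_zero' := by
    ext x t
    simp
  map_add' M N := by
    ext x t
    simp [Finset.sum_add_distrib]
  commutes' c := by
    ext x t
    have : ∀ i, ψ (if t = i then (algebraMap ℂ D) c else 0) (x.ofLp i) =
        if t = i then c • x.ofLp i else 0 :=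
      fun i => by
        split_ifs
        · rw [AlgHomClass.commutes, Algebra.algebraMap_eq_smul_one]; simp
        · simp
    simp [CStarMatrix.algebraMap_apply, this]
  map_star' M := by
    rw [ContinuousLinearMap.star_eq_adjoint, ContinuousLinearMap.eq_adjoint_iff]
    intro x y
    simp [PiLp.inner_apply, CStarMatrix.star_apply]
    simp only [sum_inner, inner_sum]
    rw [Finset.sum_comm]
    refine Finset.sum_congr rfl fun i _ => Finset.sum_congr rfl fun j _ => ?_
    rw [map_star, ContinuousLinearMap.star_eq_adjoint, ContinuousLinearMap.adjoint_inner_left]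

lemma ampl_apply (ψ : D →⋆ₐ[ℂ] (K →L[ℂ] K)) (M : CStarMatrix Γ Γ D) (x : PiLp 2 (fun _ : Γ => K))
    (t : Γ) : (ampl ψ M x) t = ∑ s, ψ (M t s) (x s) := by
  simp [ampl]

lemma ampl_injective {ψ : D →⋆ₐ[ℂ] (K →L[ℂ] K)} (hψ : Injective ψ) :
    Injective (ampl (Γ := Γ) ψ) := by
  rw [injective_iff_map_eq_zero]
  intro M hM
  ext t s
  apply hψ
  ext v
  have h := congrArg (fun T => (T (WithLp.toLp 2 (Pi.single s v))) t) hM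
  simp only [ampl_apply] at h
  rw [Finset.sum_eq_single s] at h
  · simpa using h
  · intro r _ hr
    simp [hr]
  · simp

end Amplification

section Adjacency

variable {Γ : Type} [Fintype Γ] [DecidableEq Γ] [Group Γ] {D : Type} [CStarAlgebra D]
  [PartialOrder D] [StarOrderedRing D] {K : Type} [NormedAddCommGroup K] [InnerProductSpace ℂ K]
  [CompleteSpace K] (σ : FG →* Γ) (V : FG →* D)

/-- The tensor product of the representation `V` with the permutation representation of `Γ`. -/
def tens : FG →* CStarMatrix Γ Γ D where
  toFun w := CStarMatrix.ofMatrix fun t s => if t = σ w * s then V w else 0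
  map_one' := by
    ext t s
    change (if t = σ 1 * s then V 1 else 0) = _
    simp [CStarMatrix.one_apply]
  map_mul' v w := by
    ext t s
    rw [CStarMatrix.mul_apply]
    change (if t = σ (v * w) * s then V (v * w) else 0) =
      ∑ r, (if t = σ v * r then V v else 0) * (if r = σ w * s then V w else 0)
    simp [mul_assoc]

omit [PartialOrder D] [StarOrderedRing D] in
lemma tens_apply (w : FG) (t s : Γ) : tens σ V w t s = if t = σ w * s then V w else 0 := rfl

omit [PartialOrder D] [StarOrderedRing D] in
lemma star_tens (hV : ∀ w, star (V w) = V w⁻¹) (w : FG) : star (tens σ V w) = tens σ V w⁻¹ := by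
  ext t s
  rw [CStarMatrix.star_apply, tens_apply, tens_apply]
  have : s = σ w * t ↔ t = σ w⁻¹ * s := by rw [map_inv, eq_inv_mul_iff_mul_eq, eq_comm]
  simp only [this, apply_ite star, star_zero, hV]

/-- The adjacency operator of the free group in the representation `V ⊗ σ`. -/
def adjOp : CStarMatrix Γ Γ D := ∑ p : Ltr, tens σ V (gen p)

omit [PartialOrder D] [StarOrderedRing D] in
lemma isSelfAdjoint_adjOp (hV : ∀ w, star (V w) = V w⁻¹) : IsSelfAdjoint (adjOp σ V) := by
  rw [IsSelfAdjoint, adjOp, star_sum]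
  simp only [star_tens σ V hV, ← gen_linv]
  exact linvEquiv.sum_comp (fun p => tens σ V (gen p))

/-- The vector `∑ f w • W w ζ`. -/
def orbitVec {H : Type} [NormedAddCommGroup H] [NormedSpace ℂ H] (W : FG → (H →L[ℂ] H)) (ζ : H) :
    (FG →₀ ℝ) →ₗ[ℝ] H := Finsupp.linearCombination ℝ fun w => W w ζ

lemma orbitVec_adj {H : Type} [NormedAddCommGroup H] [NormedSpace ℂ H] (W : FG →* (H →L[ℂ] H))
    (ζ : H) (f : FG →₀ ℝ) :
    orbitVec W ζ (adj f) = (∑ p : Ltr, W (gen p)) (orbitVec W ζ f) := by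
  rw [adj, map_sum, sum_apply]
  refine Finset.sum_congr rfl fun p _ => ?_
  rw [orbitVec, Finsupp.linearCombination_mapDomain]
  have := Finsupp.apply_linearCombination ℝ ((W (gen p)).restrictScalars ℝ).toLinearMap
    (fun w => W w ζ) f
  refine Eq.trans ?_ this.symm
  congr 2
  funext w
  simp [map_mul]

lemma l2_filter_le (f : FG →₀ ℝ) (P : FG → Prop) [DecidablePred P] : l2 (f.filter P) ≤ l2 f := by
  rw [l2, l2, Finsupp.support_filter, Finset.sum_filter]
  refine Finset.sum_le_sum fun w _ => ?_
  split_ifs with h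
  · rw [Finsupp.filter_apply_pos _ _ h]
  · exact sq_nonneg _

lemma l2_adj_pow_le (m : ℕ) : l2 (adj^[m] (Finsupp.single 1 1)) ≤ 36 ^ m := by
  induction m with
  | zero => simp [l2]
  | succ m ih =>
    rw [Function.iterate_succ_apply', pow_succ]
    linarith [l2_adj_le (adj^[m] (Finsupp.single 1 1))]

/-- If, on a dense set of vectors, the free group acts through `V` as in the regular representation
up to constants, then the adjacency operator of `V ⊗ σ` has norm at most `6`. -/
lemma norm_adjOp_le (hV : ∀ w, star (V w) = V w⁻¹) {ψ : D →⋆ₐ[ℂ] (K →L[ℂ] K)} (hψ : Injective ψ)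
    {E : Type} {ι : E → K} (hι : DenseRange ι)
    (h : ∀ b, ∃ C, ∀ f, ‖orbitVec (fun w => ψ (V w)) (ι b) f‖ ≤ C * √(l2 f)) :
    ‖adjOp σ V‖ ≤ 6 := by
  choose C hC using h
  have hC0 : ∀ b, 0 ≤ C b := by
    intro b
    have := (norm_nonneg _).trans (hC b (Finsupp.single 1 1))
    simpa [l2, Finsupp.support_single] using this
  rw [← NonUnitalStarAlgHom.norm_map (ampl (Γ := Γ) ψ) (ampl_injective hψ)]
  set X := ampl ψ (adjOp σ V) with hX
  have hsa : IsSelfAdjoint X := (isSelfAdjoint_adjOp σ V hV).map (ampl ψ)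
  let W : FG →* (PiLp 2 (fun _ : Γ => K) →L[ℂ] PiLp 2 (fun _ : Γ => K)) :=
    { toFun := fun w => ampl ψ (tens σ V w)
      map_one' := by rw [map_one, map_one]
      map_mul' := fun v w => by rw [map_mul, map_mul] }
  have hXW : X = ∑ p : Ltr, W (gen p) := by
    rw [hX, adjOp, map_sum]; rfl
  have hvec : ∀ (β : Γ → E) (f : FG →₀ ℝ),
      ‖orbitVec W (WithLp.toLp 2 fun s => ι (β s)) f‖ ≤ (∑ _t : Γ, ∑ s, C (β s)) * √(l2 f) := by
    intro β f
    have hcoord : ∀ t, ‖(orbitVec W (WithLp.toLp 2 fun s => ι (β s)) f) t‖ ≤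
        (∑ s, C (β s)) * √(l2 f) := by
      intro t
      have h1 : (orbitVec W (WithLp.toLp 2 fun s => ι (β s)) f) t =
          ∑ s, orbitVec (fun w => ψ (V w)) (ι (β s)) (f.filter fun w => t = σ w * s) := by
        simp only [orbitVec, Finsupp.linearCombination_apply, Finsupp.sum]
        have h2 : ∀ w, (W w (WithLp.toLp 2 fun s => ι (β s))) t =
            ∑ s, if t = σ w * s then ψ (V w) (ι (β s)) else 0 := by
          intro w
          refine (ampl_apply ψ (tens σ V w) _ t).trans (Finset.sum_congr rfl fun s _ => ?_)
          rw [tens_apply]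
          split_ifs <;> simp
        rw [WithLp.ofLp_sum, Finset.sum_apply]
        simp only [PiLp.smul_apply, h2, Finset.smul_sum]
        rw [Finset.sum_comm]
        refine Finset.sum_congr rfl fun s _ => ?_
        rw [Finsupp.support_filter, Finset.sum_filter]
        refine Finset.sum_congr rfl fun w _ => ?_
        split_ifs with hw
        · rw [Finsupp.filter_apply_pos (fun w => t = σ w * s) f hw]
        · simp
      rw [h1, Finset.sum_mul]
      refine (norm_sum_le _ _).trans (Finset.sum_le_sum fun s _ => (hC _ _).trans ?_)
      exact mul_le_mul_of_nonneg_left (Real.sqrt_le_sqrt (l2_filter_le _ _)) (hC0 _)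
    rw [PiLp.norm_eq_of_L2]
    calc _ ≤ √((∑ t, ‖(orbitVec W (WithLp.toLp 2 fun s => ι (β s)) f) t‖) ^ 2) :=
          Real.sqrt_le_sqrt (Finset.sum_sq_le_sq_sum_of_nonneg fun _ _ => norm_nonneg _)
      _ = ∑ t, ‖(orbitVec W (WithLp.toLp 2 fun s => ι (β s)) f) t‖ :=
          Real.sqrt_sq (Finset.sum_nonneg fun _ _ => norm_nonneg _)
      _ ≤ _ := by
          rw [Finset.sum_mul]
          exact Finset.sum_le_sum fun t _ => hcoord t
  have hpow : ∀ (ζ : PiLp 2 (fun _ : Γ => K)) (m : ℕ),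
      (X ^ m) ζ = orbitVec W ζ (adj^[m] (Finsupp.single 1 1)) := by
    intro ζ m
    induction m with
    | zero => simp [orbitVec]
    | succ m ih =>
      rw [Function.iterate_succ_apply', orbitVec_adj, ← hXW, ← ih, pow_succ']; rfl
  refine ContinuousLinearMap.opNorm_le_bound _ (by norm_num) fun ζ => ?_
  have hd : DenseRange fun β : Γ → E => (WithLp.toLp 2 fun s => ι (β s) : PiLp 2 (fun _ : Γ => K)) :=
    (WithLp.toLp_surjective 2).denseRange.comp (DenseRange.piMap fun _ => hι)
      (PiLp.continuous_toLp 2 _)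
  refine hd.induction_on (p := fun ζ => ‖X ζ‖ ≤ 6 * ‖ζ‖) ζ
    (isClosed_le (by fun_prop) (by fun_prop)) fun β => ?_
  refine norm_apply_le_of_growth hsa (by norm_num) (C := ∑ _t : Γ, ∑ s, C (β s)) _ fun m => ?_
  rw [hpow]
  refine (hvec β _).trans (mul_le_mul_of_nonneg_left ?_
    (Finset.sum_nonneg fun _ _ => Finset.sum_nonneg fun _ _ => hC0 _))
  rw [Real.sqrt_le_left (by positivity), ← pow_mul, mul_comm, pow_mul]
  norm_num
  exact l2_adj_pow_le m

end Adjacency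

/-! ### The model representation -/

/-- The defect `r² - x* x` of an element of norm at most `r` is of the form `y* y`. -/
lemma exists_defect {A : Type} [CStarAlgebra A] {x : A} {r : ℝ} (h : ‖x‖ ≤ r) :
    ∃ y : A, star y * y = ((r ^ 2 : ℝ) : ℂ) • 1 - star x * x := by
  let _ : PartialOrder A := CStarAlgebra.spectralOrder _
  have _ : StarOrderedRing A := CStarAlgebra.spectralOrderedRing _
  have h1 : star x * x ≤ algebraMap ℝ A (‖x‖ ^ 2) := CStarAlgebra.star_mul_le_algebraMap_norm_sq
  have h2 : algebraMap ℝ A (‖x‖ ^ 2) ≤ algebraMap ℝ A (r ^ 2) :=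
    algebraMap_mono A (pow_le_pow_left₀ (norm_nonneg _) h 2)
  have h3 : algebraMap ℝ A (r ^ 2) = ((r ^ 2 : ℝ) : ℂ) • 1 := by
    rw [Algebra.algebraMap_eq_smul_one, Complex.coe_smul]
  obtain ⟨y, hy⟩ := CStarAlgebra.nonneg_iff_eq_star_mul_self.mp
    (sub_nonneg.mpr ((h1.trans h2).trans_eq h3))
  exact ⟨y, hy.symm⟩

/-- If `a* a + b* b = e` then `‖a‖² ≤ ‖e‖`. -/
lemma norm_sq_le_of_add_eq {A : Type} [CStarAlgebra A] {a b e : A}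
    (h : star a * a + star b * b = e) : ‖a‖ ^ 2 ≤ ‖e‖ := by
  let _ : PartialOrder A := CStarAlgebra.spectralOrder _
  have _ : StarOrderedRing A := CStarAlgebra.spectralOrderedRing _
  rw [sq, ← CStarRing.norm_star_mul_self]
  refine CStarAlgebra.norm_le_norm_of_nonneg_of_le (star_mul_self_nonneg a) ?_
  rw [← h]
  exact le_add_of_nonneg_right (star_mul_self_nonneg b)

/-- The C*-algebra generated by a unitary representation of a countable group is separable. -/
lemma exists_separable {B : Type} [CStarAlgebra B] (V : FG →* B)
    (hV : ∀ w, star (V w) = V w⁻¹) :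
    ∃ (D : Type) (_ : CStarAlgebra D) (j : D →⋆ₐ[ℂ] B) (V' : FG →* D),
      TopologicalSpace.SeparableSpace D ∧ Injective j ∧ (∀ w, j (V' w) = V w) ∧
      ∀ b, (∀ w, Commute (V w) b) → ∀ d, Commute (j d) b := by
  let S : StarSubalgebra ℂ B := (StarAlgebra.adjoin ℂ (Set.range V)).topologicalClosure
  have hS : IsClosed (S : Set B) := StarSubalgebra.isClosed_topologicalClosure _
  have hmem : ∀ w, V w ∈ S := fun w =>
    StarSubalgebra.le_topologicalClosure _ (StarAlgebra.subset_adjoin ℂ _ ⟨w, rfl⟩)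
  refine ⟨S, inferInstance, S.subtype, V.codRestrict S hmem, ?_, Subtype.val_injective,
    fun _ => rfl, ?_⟩
  · have h1 : Set.range V ∪ star (Set.range V) = MonoidHom.mrange V := by
      ext b
      simp only [Set.mem_union, Set.mem_range, Set.mem_star, MonoidHom.coe_mrange]
      refine ⟨?_, Or.inl⟩
      rintro (h | ⟨w, hw⟩)
      · exact h
      · exact ⟨w⁻¹, by rw [← hV, hw, star_star]⟩
    have h2 : TopologicalSpace.IsSeparable (S : Set B) := by
      rw [StarSubalgebra.topologicalClosure_coe]
      refine TopologicalSpace.IsSeparable.closure ?_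
      have h3 := StarAlgebra.adjoin_eq_span (R := ℂ) (Set.range V)
      rw [h1, Submonoid.closure_eq] at h3
      have h4 : ((StarAlgebra.adjoin ℂ (Set.range V) : StarSubalgebra ℂ B) : Set B) =
          (Submodule.span ℂ (MonoidHom.mrange V : Set B) : Set B) := by
        rw [← h3]; rfl
      rw [h4]
      refine TopologicalSpace.IsSeparable.span ?_
      rw [MonoidHom.coe_mrange]
      exact (Set.countable_range V).isSeparable
    exact h2.separableSpace
  · intro b hb d
    have hsub := StarSubalgebra.topologicalClosure_adjoin_le_centralizer_centralizer ℂ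
      (Set.range V) d.2
    rw [StarSubalgebra.mem_centralizer_iff] at hsub
    refine ((hsub b ?_).1).symm
    rw [SetLike.mem_coe, StarSubalgebra.mem_centralizer_iff]
    rintro _ ⟨w, rfl⟩
    refine ⟨hb w, ?_⟩
    rw [hV]
    exact hb _

section Model

open scoped ComplexOrder

/-- A separable C*-algebra `D` acting in the commutant of a representation `ρ` of the bounded
families of matrices, with elements `v p` for which `∑ v p ⊗ u p` has norm at least `10`
in the joint representation although all its components `∑ v p ⊗ u p J` in the algebras
`D ⊗ Mat` have norm at most `6`; the last fact is recorded by a positivity certificate. -/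
structure Model (U : Ultrafilter (Finset ℕ)) where
  D : Type
  B : Type
  [instD : CStarAlgebra D]
  [instB : CStarAlgebra B]
  sep : TopologicalSpace.SeparableSpace D
  j : D →⋆ₐ[ℂ] B
  ρ : Fam →⋆ₐ[ℂ] B
  v : Ltr → D
  comm : ∀ d y, Commute (j d) (ρ y)
  norm_ρ_le : ∀ {y : Fam} {C : ℝ}, 0 ≤ C → (∀ᶠ J in (U : Filter (Finset ℕ)), ‖y.1 J‖ ≤ C) →
    ‖ρ y‖ ≤ C
  large : 10 ≤ ‖∑ p, j (v p) * ρ (Fam.uu (gen p))‖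
  small : ∀ J : Finset ℕ, ∃ Y : D ⊗[ℂ] Mat (GJ J), star Y * Y = (36 : ℂ) • 1 -
    star (∑ p, v p ⊗ₜ[ℂ] (Fam.uu (gen p)).1 J) * (∑ p, v p ⊗ₜ[ℂ] (Fam.uu (gen p)).1 J)

attribute [instance] Model.instD Model.instB

/-- Matrices over `D` are the algebraic tensor product of `D` with complex matrices. -/
def matTensor (Γ D : Type) [Fintype Γ] [DecidableEq Γ] [CStarAlgebra D] :
    D ⊗[ℂ] Mat Γ ≃ₐ[ℂ] CStarMatrix Γ Γ D :=
  (matrixEquivTensor Γ ℂ D).symm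

lemma matTensor_tmul {Γ D : Type} [Fintype Γ] [DecidableEq Γ] [CStarAlgebra D] (d : D)
    (M : Mat Γ) (s t : Γ) : matTensor Γ D (d ⊗ₜ M) s t = M s t • d := by
  have := congrFun (congrFun (matrixEquivTensor_apply_symm Γ ℂ D d M) s) t
  refine this.trans ?_
  change d * algebraMap ℂ D (M s t) = _
  rw [← Algebra.commutes, Algebra.smul_def]

lemma matTensor_star {Γ D : Type} [Fintype Γ] [DecidableEq Γ] [CStarAlgebra D]
    (x : D ⊗[ℂ] Mat Γ) : matTensor Γ D (star x) = star (matTensor Γ D x) := by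
  induction x with
  | zero => simp
  | add x y hx hy => rw [star_add, map_add, hx, hy, map_add, star_add]
  | tmul d M =>
    ext s t
    have h1 := matTensor_tmul (star d) (star M) s t
    have h2 := congrArg star (matTensor_tmul d M t s)
    rw [star_smul, ← CStarMatrix.star_apply] at h2
    exact h1.trans h2.symm

/-- A model from a representation of the free group and a commuting one of the bounded families,
with a vector fixed by the diagonal action and `ℓ²` bounds for the orbits of a dense set of
vectors. -/
lemma model_of_rep {U : Ultrafilter (Finset ℕ)} {H : Type} [NormedAddCommGroup H]
    [InnerProductSpace ℂ H] [CompleteSpace H] (W : FG →* (H →L[ℂ] H))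
    (hW : ∀ w, star (W w) = W w⁻¹) (ρ : Fam →⋆ₐ[ℂ] (H →L[ℂ] H))
    (hρ : ∀ {y : Fam} {C : ℝ}, 0 ≤ C → (∀ᶠ J in (U : Filter (Finset ℕ)), ‖y.1 J‖ ≤ C) → ‖ρ y‖ ≤ C)
    (hcomm : ∀ w y, Commute (W w) (ρ y)) (ζ : H) (hζ : ‖ζ‖ = 1)
    (hfix : ∀ w, W w (ρ (Fam.uu w) ζ) = ζ) {E : Type} (ι : E → H) (hι : DenseRange ι)
    (hsum : ∀ b, ∃ C, ∀ f : FG →₀ ℝ, ‖∑ w ∈ f.support, (f w : ℂ) • W w (ι b)‖ ≤ C * √(l2 f)) :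
    Nonempty (Model U) := by
  obtain ⟨D, _, j, V, hsep, hj, hjV, hcomm'⟩ := exists_separable W hW
  have hV : ∀ w, star (V w) = V w⁻¹ := fun w => hj (by rw [map_star, hjV, hjV, hW])
  let _ : PartialOrder D := CStarAlgebra.spectralOrder _
  have _ : StarOrderedRing D := CStarAlgebra.spectralOrderedRing _
  refine ⟨{ D := D, B := H →L[ℂ] H, sep := hsep, j := j, ρ := ρ,
            v := fun p => V (gen p), comm := ?_, norm_ρ_le := hρ, large := ?_,
            small := ?_ }⟩
  · exact fun d y => hcomm' _ (fun w => hcomm _ _) d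
    -- The vector fixed by the diagonal action is an eigenvector with eigenvalue `10`.
  · have h1 : (∑ p, j (V (gen p)) * ρ (Fam.uu (gen p))) ζ = (10 : ℂ) • ζ := by
      have h2 : ∀ p, (j (V (gen p)) * ρ (Fam.uu (gen p))) ζ = ζ := fun p => by
        rw [hjV]; exact hfix _
      rw [sum_apply, Finset.sum_congr rfl fun p _ => h2 p, Finset.sum_const,
        ← Nat.cast_smul_eq_nsmul ℂ]
      congr 1
    have h3 := ContinuousLinearMap.le_opNorm (∑ p, j (V (gen p)) * ρ (Fam.uu (gen p))) ζ
    rw [h1, norm_smul, hζ] at h3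
    simpa using h3
  · intro J
    have h1 : ‖adjOp (ballHom J.card) V‖ ≤ 6 := by
      refine norm_adjOp_le _ V hV hj hι fun b => ?_
      obtain ⟨C, hC⟩ := hsum b
      refine ⟨C, fun f => le_trans (le_of_eq ?_) (hC f)⟩
      congr 1
      rw [orbitVec, Finsupp.linearCombination_apply, Finsupp.sum]
      refine Finset.sum_congr rfl fun w _ => ?_
      rw [hjV, Complex.coe_smul]
    obtain ⟨y, hy⟩ := exists_defect h1
    have h2 : matTensor (GJ J) D (∑ p, V (gen p) ⊗ₜ[ℂ] (Fam.uu (gen p)).1 J) =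
        adjOp (ballHom J.card) V := by
      rw [map_sum, adjOp]
      refine Finset.sum_congr rfl fun p _ => ?_
      ext s t
      rw [matTensor_tmul, tens_apply]
      change (lreg (ballHom J.card (gen p)) : Mat (GJ J)) s t • _ = _
      rw [lreg_apply]
      split_ifs <;> simp
    refine ⟨(matTensor (GJ J) D).symm y, (matTensor (GJ J) D).injective ?_⟩
    rw [map_mul, matTensor_star, AlgEquiv.apply_symm_apply, hy, map_sub, map_mul, matTensor_star,
      h2, map_smul, map_one]
    norm_num

/-- A model exists for every ultrafilter along which cardinalities tend to infinity. -/
lemma exists_model {U : Ultrafilter (Finset ℕ)}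
    (hU : ∀ n : ℕ, ∀ᶠ J in (U : Filter (Finset ℕ)), n ≤ J.card) : Nonempty (Model U) := by
  refine model_of_rep (H := Fam.K U)
    (((Fam.trState U).L : Fam →* (Fam.K U →L[ℂ] Fam.K U)).comp Fam.uu) (fun w => ?_) (Fam.rho U)
    (Fam.norm_rho_le U) (fun w y => Fam.L_rho_commute U _ _) ((Fam.trState U).ι 1)
    (Fam.norm_ι_one U) (fun w => Fam.L_rho_uu_ι_one U w) (Fam.trState U).ι
    (Fam.trState U).denseRange_ι (fun b => ⟨_, fun f => Fam.norm_sum_L_le hU f b⟩)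
  have h1 := map_star (Fam.trState U).L (Fam.uu w)
  exact h1.symm.trans (congrArg (Fam.trState U).L (Fam.star_uu w))

end Model

/-! ### Maximal tensor norms and lifting through quotients -/

section MaxNorm

variable {A B : Type} [CStarAlgebra A] [CStarAlgebra B]

lemma CommutingRepPair.hom_tmul (p : CommutingRepPair A B) (a : A) (b : B) :
    p.hom (a ⊗ₜ b) = p.fst a * p.snd b := rfl

lemma CommutingRepPair.hom_star (p : CommutingRepPair A B) (x : A ⊗[ℂ] B) :
    p.hom (star x) = star (p.hom x) := by
  induction x with
  | zero => simp
  | add x y hx hy => rw [star_add, map_add, hx, hy, map_add, star_add]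
  | tmul a b =>
    rw [TensorProduct.star_tmul, hom_tmul, hom_tmul, star_mul, map_star, map_star]
    have := p.commutes (star a) (star b)
    rw [map_star, map_star] at this
    exact this.eq

lemma exists_bound_hom (x : A ⊗[ℂ] B) :
    ∃ M : ℝ, 0 ≤ M ∧ ∀ p : CommutingRepPair A B, ‖p.hom x‖ ≤ M := by
  induction x with
  | zero => exact ⟨0, le_rfl, fun p => by simp⟩
  | add x y hx hy =>
    obtain ⟨M, hM0, hM⟩ := hx
    obtain ⟨N, hN0, hN⟩ := hy
    refine ⟨M + N, add_nonneg hM0 hN0, fun p => ?_⟩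
    rw [map_add]
    exact (norm_add_le _ _).trans (add_le_add (hM p) (hN p))
  | tmul a b =>
    refine ⟨‖a‖ * ‖b‖, by positivity, fun p => ?_⟩
    rw [CommutingRepPair.hom_tmul]
    exact (norm_mul_le _ _).trans (mul_le_mul (NonUnitalStarAlgHom.norm_apply_le p.fst a)
      (NonUnitalStarAlgHom.norm_apply_le p.snd b) (norm_nonneg _) (norm_nonneg _))

lemma norm_hom_le_maxNorm (p : CommutingRepPair A B) (x : A ⊗[ℂ] B) : ‖p.hom x‖ ≤ maxNorm A B x := by
  obtain ⟨M, -, hM⟩ := exists_bound_hom x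
  exact le_csSup ⟨M, by rintro _ ⟨p, rfl⟩; exact hM p⟩ ⟨p, rfl⟩

lemma maxNorm_le {x : A ⊗[ℂ] B} {M : ℝ} (hM : 0 ≤ M)
    (h : ∀ p : CommutingRepPair A B, ‖p.hom x‖ ≤ M) : maxNorm A B x ≤ M :=
  Real.sSup_le (by rintro _ ⟨p, rfl⟩; exact h p) hM

end MaxNorm

/-- Elements close to a unit modulo the kernel of a quotient map, which almost annihilate a given
finite subset of the kernel. -/
lemma exists_approx {A D : Type} [CStarAlgebra A] [CStarAlgebra D] (q : A →⋆ₐ[ℂ] D) (S : Finset A)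
    (hS : ∀ s ∈ S, q s = 0) {δ : ℝ} (hδ : 0 < δ) :
    ∃ c : A, ‖c‖ ≤ 1 ∧ q c = 1 ∧ ∀ s ∈ S, ‖s * c‖ ≤ δ := by
  let _ : PartialOrder A := CStarAlgebra.spectralOrder _
  have _ : StarOrderedRing A := CStarAlgebra.spectralOrderedRing _
  set h : A := ∑ s ∈ S, star s * s with hh
  have hsa : IsSelfAdjoint h := isSelfAdjoint_sum _ fun s _ => IsSelfAdjoint.star_mul_self s
  have hqh : q h = 0 := by
    rw [hh, map_sum]
    exact Finset.sum_eq_zero fun s hs => by rw [map_mul, hS s hs, mul_zero]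
  -- For `c = ε / (h + ε)` with `h = ∑ s* s` in the kernel one has `q c = 1` and `‖c h c‖ ≤ ε`.
  set ε := δ ^ 2 with hε
  have hε0 : 0 < ε := by positivity
  set F : ℝ → ℝ := fun t => ε / (|t| + ε) with hF
  have hpos : ∀ t : ℝ, 0 < |t| + ε := fun t => by positivity
  have hFc : Continuous F := by
    exact continuous_const.div (by fun_prop) fun t => (hpos t).ne'
  set c : A := cfc F h with hc
  have hcsa : IsSelfAdjoint c := cfc_predicate F h
  refine ⟨c, ?_, ?_, ?_⟩
  · refine norm_cfc_le zero_le_one fun t _ => ?_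
    rw [Real.norm_eq_abs, abs_of_nonneg (by positivity), div_le_one (hpos t)]
    linarith [abs_nonneg t]
  · have h1 := StarAlgHomClass.map_cfc (S := ℂ) q F h hFc.continuousOn
      (AddMonoidHomClass.continuous_of_bound q 1 fun x => by
        rw [one_mul]; exact NonUnitalStarAlgHom.norm_apply_le q x) hsa (hsa.map q)
    rw [hc, h1, hqh, cfc_apply_zero]
    simp [hF, div_self hε0.ne']
  · intro s hs
    have h1 : star (s * c) * (s * c) ≤ star c * h * c := by
      have : star s * s ≤ h := Finset.single_le_sum (f := fun s => star s * s)
        (fun s _ => star_mul_self_nonneg s) hs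
      have h2 := star_left_conjugate_le_conjugate this c
      rwa [star_mul, ← mul_assoc, mul_assoc (star c) (star s) s]
    have h2 : star c * h * c = cfc (fun t => F t * t * F t) h := by
      have e1 := cfc_mul (fun t => F t * t) F h (hFc.mul continuous_id).continuousOn hFc.continuousOn
      have e2 := cfc_mul F (fun t => t) h hFc.continuousOn continuousOn_id
      rw [cfc_id' ℝ h] at e2
      rw [hcsa.star_eq, e1, e2]
    have h3 : ‖star c * h * c‖ ≤ ε := by
      rw [h2]
      refine norm_cfc_le hε0.le fun t _ => ?_
      have h4 : ‖F t * t * F t‖ = ε ^ 2 * |t| / (|t| + ε) ^ 2 := by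
        rw [norm_mul, norm_mul, Real.norm_eq_abs, Real.norm_eq_abs,
          abs_of_nonneg (show 0 ≤ F t by have := (hpos t).le; positivity)]
        simp only [hF]
        field_simp
      rw [h4, div_le_iff₀ (pow_pos (hpos t) 2)]
      nlinarith [abs_nonneg t, mul_nonneg hε0.le (sq_nonneg |t|), pow_pos hε0 2, pow_pos hε0 3,
        mul_nonneg (pow_pos hε0 2).le (abs_nonneg t)]
    have h5 := (CStarAlgebra.norm_le_norm_of_nonneg_of_le (star_mul_self_nonneg (s * c)) h1).trans h3
    rw [CStarRing.norm_star_mul_self, ← sq] at h5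
    exact (sq_le_sq₀ (norm_nonneg _) hδ.le).mp h5

section Lift

variable {A D N : Type} [CStarAlgebra A] [CStarAlgebra D] [CStarAlgebra N]
  (q₁ : A →⋆ₐ[ℂ] D) (q₂ : A →⋆ₐ[ℂ] N)

/-- Right multiplication by `c ⊗ d` makes `z` small, uniformly in all commuting pairs of
representations, as soon as `c` and `d` almost annihilate certain finite subsets of the kernels. -/
def KerBound (z : A ⊗[ℂ] A) : Prop :=
  ∃ S S' : Finset A, (∀ s ∈ S, q₁ s = 0) ∧ (∀ s ∈ S', q₂ s = 0) ∧ ∃ M : ℝ, 0 ≤ M ∧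
    ∀ (δ : ℝ) (c d : A), 0 ≤ δ → ‖c‖ ≤ 1 → ‖d‖ ≤ 1 → (∀ s ∈ S, ‖s * c‖ ≤ δ) →
      (∀ s ∈ S', ‖s * d‖ ≤ δ) →
      ∀ p : CommutingRepPair A A, ‖p.hom z * (p.fst c * p.snd d)‖ ≤ M * δ

variable {q₁ q₂}

open Classical in
lemma KerBound.add {z w : A ⊗[ℂ] A} (hz : KerBound q₁ q₂ z) (hw : KerBound q₁ q₂ w) :
    KerBound q₁ q₂ (z + w) := by
  obtain ⟨S, S', hS, hS', M, hM, h⟩ := hz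
  obtain ⟨T, T', hT, hT', N, hN, h'⟩ := hw
  refine ⟨S ∪ T, S' ∪ T', ?_, ?_, M + N, add_nonneg hM hN, ?_⟩
  · intro s hs
    exact (Finset.mem_union.mp hs).elim (hS s) (hT s)
  · intro s hs
    exact (Finset.mem_union.mp hs).elim (hS' s) (hT' s)
  · intro δ c d hδ hc hd h1 h2 p
    rw [map_add, add_mul, add_mul]
    exact (norm_add_le _ _).trans (add_le_add
      (h δ c d hδ hc hd (fun s hs => h1 s (Finset.mem_union_left _ hs))
        (fun s hs => h2 s (Finset.mem_union_left _ hs)) p)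
      (h' δ c d hδ hc hd (fun s hs => h1 s (Finset.mem_union_right _ hs))
        (fun s hs => h2 s (Finset.mem_union_right _ hs)) p))

lemma KerBound.mul {z : A ⊗[ℂ] A} (hz : KerBound q₁ q₂ z) (w : A ⊗[ℂ] A) :
    KerBound q₁ q₂ (w * z) := by
  obtain ⟨S, S', hS, hS', M, hM, h⟩ := hz
  obtain ⟨N, hN, hw⟩ := exists_bound_hom w
  refine ⟨S, S', hS, hS', N * M, mul_nonneg hN hM, fun δ c d hδ hc hd h1 h2 p => ?_⟩
  rw [map_mul, mul_assoc, mul_assoc]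
  exact (norm_mul_le _ _).trans (mul_le_mul (hw p) (h δ c d hδ hc hd h1 h2 p) (norm_nonneg _) hN)

lemma KerBound.zero : KerBound q₁ q₂ 0 :=
  ⟨∅, ∅, by simp, by simp, 0, le_rfl, fun δ c d _ _ _ _ _ p => by simp⟩

lemma KerBound.left {k : A} (hk : q₁ k = 0) : KerBound q₁ q₂ (k ⊗ₜ 1) := by
  refine ⟨{k}, ∅, by simpa using hk, by simp, 1, zero_le_one, fun δ c d hδ hc hd h1 h2 p => ?_⟩
  rw [CommutingRepPair.hom_tmul, map_one, mul_one, ← mul_assoc, ← map_mul, one_mul]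
  refine (norm_mul_le _ _).trans ?_
  have h3 := (NonUnitalStarAlgHom.norm_apply_le p.fst (k * c)).trans (h1 k (by simp))
  have h4 := (NonUnitalStarAlgHom.norm_apply_le p.snd d).trans hd
  nlinarith [norm_nonneg (p.snd d), norm_nonneg (p.fst (k * c))]

lemma KerBound.right {k : A} (hk : q₂ k = 0) : KerBound q₁ q₂ (1 ⊗ₜ k) := by
  refine ⟨∅, {k}, by simp, by simpa using hk, 1, zero_le_one, fun δ c d hδ hc hd h1 h2 p => ?_⟩
  rw [CommutingRepPair.hom_tmul, map_one, one_mul, ← mul_assoc, ← (p.commutes c k).eq, mul_assoc,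
    ← map_mul, one_mul]
  refine (norm_mul_le _ _).trans ?_
  have h3 := (NonUnitalStarAlgHom.norm_apply_le p.snd (k * d)).trans (h2 k (by simp))
  have h4 := (NonUnitalStarAlgHom.norm_apply_le p.fst c).trans hc
  nlinarith [norm_nonneg (p.fst c), norm_nonneg (p.snd (k * d))]

lemma KerBound.of_mem_ker (h₁ : Surjective q₁) (h₂ : Surjective q₂) {z : A ⊗[ℂ] A}
    (hz : Algebra.TensorProduct.map q₁.toAlgHom q₂.toAlgHom z = 0) : KerBound q₁ q₂ z := by
  have h := Algebra.TensorProduct.map_ker (f := q₁.toAlgHom) (g := q₂.toAlgHom) h₁ h₂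
  rw [← RingHom.mem_ker, h] at hz
  obtain ⟨x, hx, y, hy, rfl⟩ := Submodule.mem_sup.mp hz
  refine KerBound.add ?_ ?_
  · refine Submodule.span_induction (p := fun x _ => KerBound q₁ q₂ x) ?_ KerBound.zero
      (fun _ _ _ _ => KerBound.add) (fun w _ _ h => h.mul w) hx
    rintro _ ⟨k, hk, rfl⟩
    exact KerBound.left hk
  · refine Submodule.span_induction (p := fun x _ => KerBound q₁ q₂ x) ?_ KerBound.zero
      (fun _ _ _ _ => KerBound.add) (fun w _ _ h => h.mul w) hy
    rintro _ ⟨k, hk, rfl⟩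
    exact KerBound.right hk

lemma map_map_star (x : A ⊗[ℂ] A) : Algebra.TensorProduct.map q₁.toAlgHom q₂.toAlgHom (star x) =
    star (Algebra.TensorProduct.map q₁.toAlgHom q₂.toAlgHom x) := by
  induction x with
  | zero => simp
  | add x y hx hy => rw [star_add, map_add, hx, hy, map_add, star_add]
  | tmul a b =>
    rw [TensorProduct.star_tmul, Algebra.TensorProduct.map_tmul, Algebra.TensorProduct.map_tmul,
      TensorProduct.star_tmul]
    congr 1
    · exact map_star q₁ a
    · exact map_star q₂ b

open Classical in
/-- A positivity certificate for `∑ q₁ (a p) ⊗ u p` in the algebraic tensor product of two quotients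
yields lifts whose maximal tensor norm is controlled. -/
lemma exists_lifts (h₁ : Surjective q₁) (h₂ : Surjective q₂) {P : Type} [Fintype P] (a : P → A)
    (u : P → N) (hu : ∀ p, star (u p) * u p = 1) (Y : D ⊗[ℂ] N)
    (hY : star Y * Y = (36 : ℂ) • 1 -
      star (∑ p, q₁ (a p) ⊗ₜ[ℂ] u p) * (∑ p, q₁ (a p) ⊗ₜ[ℂ] u p)) :
    ∃ f g : P → A, (∀ p, q₁ (f p) = q₁ (a p)) ∧ (∀ p, q₂ (g p) = u p) ∧ (∀ p, ‖f p‖ ≤ ‖a p‖) ∧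
      (∀ p, ‖g p‖ ≤ 2) ∧ maxNorm A A (∑ p, f p ⊗ₜ[ℂ] g p) ≤ 7 := by
  choose b hb using fun p => h₂ (u p)
  obtain ⟨Y', hY'⟩ := Algebra.TensorProduct.map_surjective q₁.toAlgHom q₂.toAlgHom h₁ h₂ Y
  set x : A ⊗[ℂ] A := ∑ p, a p ⊗ₜ[ℂ] b p with hx
  have hqx : Algebra.TensorProduct.map q₁.toAlgHom q₂.toAlgHom x = ∑ p, q₁ (a p) ⊗ₜ[ℂ] u p := by
    rw [hx, map_sum]
    refine Finset.sum_congr rfl fun p _ => ?_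
    rw [Algebra.TensorProduct.map_tmul, ← hb]; rfl
  -- The remainder of the lifted certificate lies in the kernel of the quotient map of `A ⊗ A`.
  set z : A ⊗[ℂ] A := (36 : ℂ) • 1 - star x * x - star Y' * Y' with hz
  have hzk : Algebra.TensorProduct.map q₁.toAlgHom q₂.toAlgHom z = 0 := by
    rw [hz, map_sub, map_sub, map_mul, map_mul, map_map_star, map_map_star, hY', hqx, hY, map_smul,
      map_one, sub_self]
  obtain ⟨S, S', hS, hS', M, hM, hbd⟩ := KerBound.of_mem_ker h₁ h₂ hzk
  set δ : ℝ := 1 / (M + 1) with hδ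
  have hM1 : 0 < M + 1 := by linarith
  have hδ0 : 0 < δ := by positivity
  have hδ1 : δ ≤ 1 := by rw [hδ, div_le_one hM1]; linarith
  have hMδ : M * δ ≤ 1 := by rw [hδ, mul_one_div, div_le_one hM1]; linarith
  obtain ⟨c, hc, hqc, hSc⟩ := exists_approx q₁ S hS hδ0
  obtain ⟨d, hd, hqd, hSd⟩ := exists_approx q₂
    (S' ∪ Finset.univ.image fun p => star (b p) * b p - 1) (fun s hs => by
      rcases Finset.mem_union.mp hs with hs | hs
      · exact hS' s hs
      · obtain ⟨p, -, rfl⟩ := Finset.mem_image.mp hs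
        rw [map_sub, map_mul, map_star, hb, hu, map_one, sub_self]) hδ0
  refine ⟨fun p => a p * c, fun p => b p * d, ?_, ?_, ?_, ?_, ?_⟩
  · intro p; rw [map_mul, hqc, mul_one]
  · intro p; rw [map_mul, hqd, mul_one, hb]
  · intro p
    exact (norm_mul_le _ _).trans (mul_le_of_le_one_right (norm_nonneg _) hc)
  · intro p
    have h1 : star (b p * d) * (b p * d) = star d * d + star d * ((star (b p) * b p - 1) * d) := by
      rw [star_mul]; noncomm_ring
    have h2 : ‖(star (b p) * b p - 1) * d‖ ≤ δ := hSd _ (Finset.mem_union_right _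
      (Finset.mem_image_of_mem _ (Finset.mem_univ p)))
    have h3 : ‖b p * d‖ ^ 2 ≤ 2 := by
      rw [sq, ← CStarRing.norm_star_mul_self, h1]
      refine (norm_add_le _ _).trans ?_
      have h4 := norm_mul_le (star d) d
      have h5 := norm_mul_le (star d) ((star (b p) * b p - 1) * d)
      rw [norm_star] at h4 h5
      nlinarith [norm_nonneg d, norm_nonneg ((star (b p) * b p - 1) * d)]
    nlinarith [norm_nonneg (b p * d)]
    -- Multiplication by `C = c ⊗ d` turns the certificate into
    -- `(x C)* (x C) + (Y' C)* (Y' C) = 36 C* C - C* z C`, of norm at most `37 ≤ 49`.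
  · refine maxNorm_le (by norm_num) fun p => ?_
    set C := p.fst c * p.snd d with hC
    have hC1 : ‖C‖ ≤ 1 := (norm_mul_le _ _).trans (mul_le_one₀
      ((NonUnitalStarAlgHom.norm_apply_le p.fst c).trans hc) (norm_nonneg _)
      ((NonUnitalStarAlgHom.norm_apply_le p.snd d).trans hd))
    have h1 : p.hom (∑ i, (a i * c) ⊗ₜ[ℂ] (b i * d)) = p.hom x * C := by
      rw [hx, map_sum, map_sum, Finset.sum_mul]
      refine Finset.sum_congr rfl fun i _ => ?_
      rw [CommutingRepPair.hom_tmul, CommutingRepPair.hom_tmul, map_mul, map_mul, hC]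
      simp only [mul_assoc]
      congr 1
      rw [← mul_assoc, ← mul_assoc, (p.commutes c (b i)).eq]
    have h2 : star (p.hom x * C) * (p.hom x * C) + star (p.hom Y' * C) * (p.hom Y' * C) =
        (36 : ℂ) • (star C * C) - star C * (p.hom z * C) := by
      rw [hz, map_sub, map_sub, map_mul, map_mul, p.hom_star, p.hom_star, map_smul, map_one,
        star_mul (p.hom x), star_mul (p.hom Y')]
      simp only [sub_mul, mul_sub, smul_mul_assoc, mul_smul_comm, one_mul, mul_assoc]
      abel
    have h3 := norm_sq_le_of_add_eq h2
    have h4 : ‖(36 : ℂ) • (star C * C) - star C * (p.hom z * C)‖ ≤ 36 + 1 := by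
      refine (norm_sub_le _ _).trans (add_le_add ?_ ?_)
      · rw [norm_smul, CStarRing.norm_star_mul_self]
        norm_num
        nlinarith [norm_nonneg C]
      · refine (norm_mul_le _ _).trans ?_
        rw [norm_star]
        have h5 := hbd δ c d hδ0.le hc hd hSc
          (fun s hs => hSd s (Finset.mem_union_left _ hs)) p
        exact (mul_le_mul hC1 (h5.trans hMδ) (norm_nonneg _) zero_le_one).trans_eq (one_mul 1)
    rw [h1]
    nlinarith [norm_nonneg (p.hom x * C)]

end Lift

/-! ### Failure of property max-`U` -/

section ConstHom

variable {I A : Type} [CStarAlgebra A] (U : Ultrafilter I)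

/-- The diagonal embedding into the ultrapower. -/
def constHom : A →⋆ₐ[ℂ] Ultra U A where
  toFun a := Ultra.cls U fun _ => a
  map_one' := Ultra.isCStarUltraproduct.map_one
  map_zero' := by
    have := (Ultra.isCStarUltraproduct (U := U) (A := A)).map_smul 0 1 Bdd.one
    rw [zero_smul, zero_smul] at this
    exact this
  map_add' a b := Ultra.isCStarUltraproduct.map_add _ _ (Bdd.const a) (Bdd.const b)
  map_mul' a b := Ultra.isCStarUltraproduct.map_mul _ _ (Bdd.const a) (Bdd.const b)
  map_star' a := Ultra.isCStarUltraproduct.map_star _ (Bdd.const a)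
  commutes' c := by
    have := (Ultra.isCStarUltraproduct (U := U) (A := A)).map_smul c 1 Bdd.one
    rw [(Ultra.isCStarUltraproduct (U := U) (A := A)).map_one] at this
    rw [Algebra.algebraMap_eq_smul_one, Algebra.algebraMap_eq_smul_one]
    exact this

lemma norm_constHom (a : A) : ‖constHom U a‖ = ‖a‖ :=
  tendsto_nhds_unique (Ultra.isCStarUltraproduct.norm_eq _ (Bdd.const a)) tendsto_const_nhds

end ConstHom

lemma Bdd.comp_hom {I A : Type} [CStarAlgebra A] {B : I → Type} [∀ i, CStarAlgebra (B i)]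
    {f : I → A} (hf : Bdd f) (q : ∀ i, A →⋆ₐ[ℂ] B i) : Bdd fun i => q i (f i) := by
  obtain ⟨M, hM⟩ := hf
  exact ⟨M, fun i => (NonUnitalStarAlgHom.norm_apply_le (q i) (f i)).trans (hM i)⟩

section Contradiction

open scoped ComplexOrder

variable {A : Type} [CStarAlgebra A] {U : Ultrafilter (Finset ℕ)}

/-- A quotient map of `A` induces a *-homomorphism of ultrapowers. -/
lemma exists_ultra_map {B : Type} [CStarAlgebra B] (φ : A →⋆ₐ[ℂ] B) :
    ∃ Φ : Ultra U A →⋆ₐ[ℂ] Ultra U B,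
      ∀ f, Bdd f → Φ (Ultra.cls U f) = Ultra.cls U fun J => φ (f J) := by
  have hB : IsCStarUltraproduct U (fun _ => B) (Ultra U B) (Ultra.cls U) :=
    Ultra.isCStarUltraproduct
  have hb : ∀ f : Finset ℕ → A, Bdd f → Bdd fun J => φ (f J) :=
    fun f hf => hf.comp_hom fun _ => φ
  refine exists_ultra_lift Ultra.isCStarUltraproduct (fun f => Ultra.cls U fun J => φ (f J))
    ?_ ?_ ?_ ?_ ?_ ?_
  · rw [← hB.map_one]
    congr 1
    funext J
    exact map_one φ
  · intro f g hf hg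
    rw [← hB.map_add _ _ (hb f hf) (hb g hg)]
    congr 1
    funext J
    exact map_add φ _ _
  · intro f g hf hg
    rw [← hB.map_mul _ _ (hb f hf) (hb g hg)]
    congr 1
    funext J
    exact map_mul φ _ _
  · intro f hf
    rw [← hB.map_star _ (hb f hf)]
    congr 1
    funext J
    exact map_star φ _
  · intro c f hf
    rw [← hB.map_smul c _ (hb f hf)]
    congr 1
    funext J
    exact map_smul φ c _
  · intro f hf h0
    rw [← norm_eq_zero]
    refine tendsto_nhds_unique (hB.norm_eq _ (hb f hf)) (squeeze_zero (fun _ => norm_nonneg _)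
      (fun J => NonUnitalStarAlgHom.norm_apply_le φ (f J)) h0)

/-- The image of a bounded family under *-homomorphisms into the matrix algebras. -/
def famMap (q : ∀ J, A →⋆ₐ[ℂ] Mat (GJ J)) (f : Finset ℕ → A) (hf : Bdd f) : Fam :=
  ⟨fun J => q J (f J), hf.comp_hom q⟩

open Classical in
/-- A representation of the bounded families of matrices which is continuous along `U` induces a
representation of the ultrapower of `A`. -/
lemma Model.exists_ultra_rep (m : Model U) (q : ∀ J, A →⋆ₐ[ℂ] Mat (GJ J)) :
    ∃ Φ : Ultra U A →⋆ₐ[ℂ] m.B,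
      ∀ f (hf : Bdd f), Φ (Ultra.cls U f) = m.ρ (famMap q f hf) := by
  suffices h : ∃ Φ : Ultra U A →⋆ₐ[ℂ] m.B, ∀ f, Bdd f → Φ (Ultra.cls U f) =
      if hf : Bdd f then m.ρ (famMap q f hf) else 0 by
    obtain ⟨Φ, hΦ⟩ := h
    exact ⟨Φ, fun f hf => by rw [hΦ f hf, dif_pos hf]⟩
  refine exists_ultra_lift (Ultra.isCStarUltraproduct (U := U) (A := A))
    (fun f => if hf : Bdd f then m.ρ (famMap q f hf) else 0) ?_ ?_ ?_ ?_ ?_ ?_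
  · rw [dif_pos Bdd.one, ← map_one m.ρ]
    congr 1
    exact Subtype.ext (funext fun J => map_one (q J))
  · intro f g hf hg
    simp only [dif_pos hf, dif_pos hg, dif_pos (hf.add hg)]
    rw [← map_add m.ρ]
    congr 1
    exact Subtype.ext (funext fun J => map_add (q J) _ _)
  · intro f g hf hg
    simp only [dif_pos hf, dif_pos hg, dif_pos (hf.mul hg)]
    rw [← map_mul m.ρ]
    congr 1
    exact Subtype.ext (funext fun J => map_mul (q J) _ _)
  · intro f hf
    simp only [dif_pos hf, dif_pos hf.star]
    rw [← map_star m.ρ]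
    congr 1
    exact Subtype.ext (funext fun J => map_star (q J) _)
  · intro c f hf
    simp only [dif_pos hf, dif_pos (hf.smul c)]
    rw [← map_smul m.ρ]
    congr 1
    exact Subtype.ext (funext fun J => map_smul (q J) c _)
  · intro f hf h0
    simp only [dif_pos hf]
    rw [← norm_le_zero_iff]
    refine le_of_forall_pos_le_add fun ε hε => ?_
    rw [zero_add]
    refine m.norm_ρ_le hε.le ?_
    filter_upwards [h0.eventually (gt_mem_nhds hε)] with J hJ
    exact (NonUnitalStarAlgHom.norm_apply_le (q J) (f J)).trans hJ.le

/-- In the ultrapower the maximal norm is at least the norm in the model. -/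
lemma Model.le_maxNorm (m : Model U) (q₁ : A →⋆ₐ[ℂ] m.D) (q₂ : ∀ J, A →⋆ₐ[ℂ] Mat (GJ J)) {n : ℕ}
    (e : Fin n ≃ Ltr) (f g : Fin n → Finset ℕ → A) (hf : ∀ k, Bdd (f k)) (hg : ∀ k, Bdd (g k))
    (hqf : ∀ k J, q₁ (f k J) = m.v (e k)) (hqg : ∀ k J, q₂ J (g k J) = (Fam.uu (gen (e k))).1 J) :
    10 ≤ maxNorm (Ultra U A) (Ultra U A)
      (∑ k, Ultra.cls U (f k) ⊗ₜ[ℂ] Ultra.cls U (g k)) := by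
  obtain ⟨Φ₁, h₁⟩ := exists_ultra_map (U := U) (m.j.comp q₁)
  obtain ⟨Φ₂, h₂⟩ := m.exists_ultra_rep q₂
  have hB : IsCStarUltraproduct U (fun _ => m.B) (Ultra U m.B) (Ultra.cls U) :=
    Ultra.isCStarUltraproduct
  have hA : IsCStarUltraproduct U (fun _ => A) (Ultra U A) (Ultra.cls U) :=
    Ultra.isCStarUltraproduct
  let p : CommutingRepPair (Ultra U A) (Ultra U A) :=
    { carrier := Ultra U m.B
      fst := Φ₁
      snd := (constHom U).comp Φ₂
      commutes := by
        intro a b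
        obtain ⟨f, hf, rfl⟩ := hA.surj a
        obtain ⟨g, hg, rfl⟩ := hA.surj b
        have hf' : Bdd f := ⟨_, hf⟩
        have hfb : Bdd fun J => (m.j.comp q₁) (f J) := hf'.comp_hom fun _ => m.j.comp q₁
        change Φ₁ _ * constHom U (Φ₂ _) = constHom U (Φ₂ _) * Φ₁ _
        rw [h₁ f hf', h₂ g ⟨_, hg⟩]
        refine (hB.map_mul _ _ hfb (Bdd.const _)).symm.trans
          (Eq.trans ?_ (hB.map_mul _ _ (Bdd.const _) hfb))
        congr 1
        funext J
        exact (m.comm (q₁ (f J)) _).eq }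
  have h3 : p.hom (∑ k, Ultra.cls U (f k) ⊗ₜ[ℂ] Ultra.cls U (g k)) =
      constHom U (∑ l, m.j (m.v l) * m.ρ (Fam.uu (gen l))) := by
    rw [map_sum, map_sum, ← e.sum_comp]
    refine Finset.sum_congr rfl fun k _ => ?_
    rw [CommutingRepPair.hom_tmul, map_mul]
    congr 1
    · refine (h₁ _ (hf k)).trans ?_
      change _ = Ultra.cls U fun _ => m.j (m.v (e k))
      congr 1
      funext J
      exact congrArg m.j (hqf k J)
    · change constHom U (Φ₂ (Ultra.cls U (g k))) = _
      rw [h₂ _ (hg k)]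
      congr 2
      exact Subtype.ext (funext fun J => hqg k J)
  calc (10 : ℝ) ≤ ‖∑ l, m.j (m.v l) * m.ρ (Fam.uu (gen l))‖ := m.large
    _ = ‖p.hom (∑ k, Ultra.cls U (f k) ⊗ₜ[ℂ] Ultra.cls U (g k))‖ := by rw [h3, norm_constHom]
    _ ≤ _ := norm_hom_le_maxNorm p _

lemma separableSpace_mat (G : Type) [Fintype G] [DecidableEq G] :
    TopologicalSpace.SeparableSpace (Mat G) := by
  have : FiniteDimensional ℂ (Mat G) :=
    inferInstanceAs (FiniteDimensional ℂ (Matrix G G ℂ))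
  have : ProperSpace (Mat G) := FiniteDimensional.proper ℂ (Mat G)
  infer_instance

/-- Lifting the components of a model through quotient maps of `A` gives families with maximal norms
at most `7`, while the norm of their classes is at least `10`. -/
theorem not_hasMaxU (hsurj : SurjectivelyUniversal A)
    (hU : ∀ n : ℕ, ∀ᶠ J in (U : Filter (Finset ℕ)), n ≤ J.card) : ¬ HasMaxU U A := by
  intro hmax
  obtain ⟨m⟩ := exists_model hU
  obtain ⟨q₁, hq₁⟩ := hsurj m.D m.sep
  choose q₂ hq₂ using fun J : Finset ℕ => hsurj (Mat (GJ J)) (separableSpace_mat _)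
  choose a ha using fun p => hq₁ (m.v p)
  have key : ∀ J : Finset ℕ, ∃ f g : Ltr → A, (∀ p, q₁ (f p) = q₁ (a p)) ∧
      (∀ p, q₂ J (g p) = (Fam.uu (gen p)).1 J) ∧ (∀ p, ‖f p‖ ≤ ‖a p‖) ∧
      (∀ p, ‖g p‖ ≤ 2) ∧ maxNorm A A (∑ p, f p ⊗ₜ[ℂ] g p) ≤ 7 := by
    intro J
    obtain ⟨Y, hY⟩ := m.small J
    refine exists_lifts hq₁ (hq₂ J) a _ (fun p => ?_) Y (by simpa only [ha] using hY)
    change star (lreg (ballHom J.card (gen p))) * lreg (ballHom J.card (gen p)) = 1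
    rw [star_lreg, ← map_mul, inv_mul_cancel, map_one]
  choose f g hf hg hfn hgn hfg using key
  let e : Fin (Fintype.card Ltr) ≃ Ltr := (Fintype.equivFin Ltr).symm
  have hfb : ∀ k, Bdd fun J => f J (e k) := fun k => ⟨_, fun J => hfn J (e k)⟩
  have hgb : ∀ k, Bdd fun J => g J (e k) := fun k => ⟨_, fun J => hgn J (e k)⟩
  have h1 := hmax (Ultra U A) (Ultra.cls U) Ultra.isCStarUltraproduct _
    (fun k J => f J (e k)) (fun k J => g J (e k)) hfb hgb
  have h2 := m.le_maxNorm q₁ q₂ e (fun k J => f J (e k)) (fun k J => g J (e k)) hfb hgb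
    (fun k J => (hf J (e k)).trans (ha _)) (fun k J => hg J (e k))
  have h3 := le_of_tendsto' h1 (b := 7) fun J =>
    (congrArg (maxNorm A A) (e.sum_comp fun p => f J p ⊗ₜ[ℂ] g J p)).trans_le (hfg J)
  linarith

end Contradiction

/-! ### Łoś's theorem and definability -/

lemma norm_snoc_le {n : ℕ} {A : Type} [CStarAlgebra A] {a : Fin n → A} (ha : ∀ k, ‖a k‖ ≤ 1)
    {b : A} (hb : ‖b‖ ≤ 1) (k : Fin (n + 1)) : ‖(Fin.snoc a b : Fin (n + 1) → A) k‖ ≤ 1 := by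
  refine Fin.lastCases ?_ (fun k => ?_) k
  · rwa [Fin.snoc_last]
  · rw [Fin.snoc_castSucc]
    exact ha k

lemma norm_append_le {n : ℕ} {A : Type} [CStarAlgebra A] {a b : Fin n → A}
    (ha : ∀ k, ‖a k‖ ≤ 1) (hb : ∀ k, ‖b k‖ ≤ 1) (k : Fin (n + n)) :
    ‖Fin.append a b k‖ ≤ 1 := by
  refine Fin.addCases (fun k => ?_) (fun k => ?_) k
  · rw [Fin.append_left]
    exact ha k
  · rw [Fin.append_right]
    exact hb k

/-- Applying a map to the values commutes with appending an element. -/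
lemma comp_snoc {n : ℕ} {X Y : Type} (p : X → Y) (a : Fin n → X) (b : X) :
    (fun k => p ((Fin.snoc a b : Fin (n + 1) → X) k)) =
      (Fin.snoc (fun k => p (a k)) (p b) : Fin (n + 1) → Y) := by
  funext k
  refine Fin.lastCases ?_ (fun k => ?_) k
  · rw [Fin.snoc_last, Fin.snoc_last]
  · rw [Fin.snoc_castSucc, Fin.snoc_castSucc]

lemma comp_append {m n : ℕ} {X Y : Type} (p : X → Y) (a : Fin m → X) (b : Fin n → X) :
    (fun k => p (Fin.append a b k)) = Fin.append (fun k => p (a k)) fun k => p (b k) := by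
  funext k
  refine Fin.addCases (fun k => ?_) (fun k => ?_) k
  · rw [Fin.append_left, Fin.append_left]
  · rw [Fin.append_right, Fin.append_right]

section Eval

variable {A : Type} [CStarAlgebra A] {n : ℕ} (a : Fin n → A)

lemma CTerm.eval_var (k : Fin n) : (CTerm.var k).eval a = a k := by rw [CTerm.eval]

lemma CTerm.eval_one : (CTerm.one : CTerm n).eval a = 1 := by rw [CTerm.eval]

lemma CTerm.eval_add (s t : CTerm n) : (s.add t).eval a = s.eval a + t.eval a := by
  rw [CTerm.eval]

lemma CTerm.eval_mul (s t : CTerm n) : (s.mul t).eval a = s.eval a * t.eval a := by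
  rw [CTerm.eval]

lemma CTerm.eval_star (t : CTerm n) : t.star.eval a = Star.star (t.eval a) := by rw [CTerm.eval]

lemma CTerm.eval_smul (c : ℂ) (t : CTerm n) : (CTerm.smul c t).eval a = c • t.eval a := by
  rw [CTerm.eval]

end Eval

/-- Formulas are bounded on the unit ball, uniformly in the algebra. -/
lemma Formula.exists_bound {n : ℕ} (phi : Formula n) : ∃ M : ℝ, ∀ (A : Type) [CStarAlgebra A]
    (a : Fin n → A), (∀ k, ‖a k‖ ≤ 1) → |phi.interp A a| ≤ M := by
  induction phi with
  | atom t =>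
    have ht : ∀ {n : ℕ} (t : CTerm n), ∃ M : ℝ, 0 ≤ M ∧ ∀ (A : Type) [CStarAlgebra A] (a : Fin n → A),
        (∀ k, ‖a k‖ ≤ 1) → ‖t.eval a‖ ≤ M := by
      intro n t
      induction t with
      | var k =>
        refine ⟨1, zero_le_one, fun A _ a ha => ?_⟩
        rw [CTerm.eval_var]
        exact ha k
      | one =>
        refine ⟨1, zero_le_one, fun A _ a ha => ?_⟩
        rw [CTerm.eval_one]
        rcases subsingleton_or_nontrivial A with h | h
        · rw [Subsingleton.elim (1 : A) 0, norm_zero]; exact zero_le_one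
        · exact CStarRing.norm_one.le
      | add s t hs ht =>
        obtain ⟨M, hM, h⟩ := hs
        obtain ⟨N, hN, h'⟩ := ht
        exact ⟨M + N, add_nonneg hM hN, fun A _ a ha => (congrArg norm (CTerm.eval_add a s t)).trans_le <|
          (norm_add_le _ _).trans (add_le_add (h A a ha) (h' A a ha))⟩
      | mul s t hs ht =>
        obtain ⟨M, hM, h⟩ := hs
        obtain ⟨N, hN, h'⟩ := ht
        exact ⟨M * N, mul_nonneg hM hN, fun A _ a ha => (congrArg norm (CTerm.eval_mul a s t)).trans_le <|
          (norm_mul_le _ _).trans (mul_le_mul (h A a ha) (h' A a ha) (norm_nonneg _) hM)⟩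
      | star t ht =>
        obtain ⟨M, hM, h⟩ := ht
        exact ⟨M, hM, fun A _ a ha => (congrArg norm (CTerm.eval_star a t)).trans_le <|
          (norm_star _).trans_le (h A a ha)⟩
      | smul c t ht =>
        obtain ⟨M, hM, h⟩ := ht
        exact ⟨‖c‖ * M, by positivity, fun A _ a ha => (congrArg norm (CTerm.eval_smul a c t)).trans_le <|
          (norm_smul_le _ _).trans (mul_le_mul_of_nonneg_left (h A a ha) (norm_nonneg _))⟩
    obtain ⟨M, hM, h⟩ := ht t
    exact ⟨M, fun A _ a ha => (abs_of_nonneg (norm_nonneg (t.eval a))).trans_le (h A a ha)⟩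
  | comb u hu phis ih =>
    choose M hM using ih
    obtain ⟨C, hC⟩ := (isCompact_univ_pi fun j => isCompact_Icc (a := -M j) (b := M j)
      ).exists_bound_of_continuousOn hu.continuousOn
    refine ⟨C, fun A _ a ha => hC (fun j => (phis j).interp A a) ?_⟩
    exact fun j _ => abs_le.mp (hM j A a ha)
  | sup phi ih =>
    obtain ⟨M, hM⟩ := ih
    refine ⟨M, fun A _ a ha => ?_⟩
    have : Nonempty {x : A // ‖x‖ ≤ 1} := ⟨0, by simp⟩
    have h : ∀ b : {x : A // ‖x‖ ≤ 1}, |phi.interp A (Fin.snoc a b.1)| ≤ M :=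
      fun b => hM A _ (norm_snoc_le ha b.2)
    change |⨆ b : {x : A // ‖x‖ ≤ 1}, phi.interp A (Fin.snoc a b.1)| ≤ M
    refine abs_le.mpr ⟨?_, ciSup_le fun b => (abs_le.mp (h b)).2⟩
    exact (abs_le.mp (h (Classical.arbitrary _))).1.trans
      (le_ciSup (f := fun b : {x : A // ‖x‖ ≤ 1} => phi.interp A (Fin.snoc a b.1))
        ⟨M, by rintro _ ⟨b, rfl⟩; exact (abs_le.mp (h b)).2⟩ _)
  | inf phi ih =>
    obtain ⟨M, hM⟩ := ih
    refine ⟨M, fun A _ a ha => ?_⟩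
    have : Nonempty {x : A // ‖x‖ ≤ 1} := ⟨0, by simp⟩
    have h : ∀ b : {x : A // ‖x‖ ≤ 1}, |phi.interp A (Fin.snoc a b.1)| ≤ M :=
      fun b => hM A _ (norm_snoc_le ha b.2)
    change |⨅ b : {x : A // ‖x‖ ≤ 1}, phi.interp A (Fin.snoc a b.1)| ≤ M
    refine abs_le.mpr ⟨le_ciInf fun b => (abs_le.mp (h b)).1, ?_⟩
    exact (ciInf_le (f := fun b : {x : A // ‖x‖ ≤ 1} => phi.interp A (Fin.snoc a b.1))
        ⟨-M, by rintro _ ⟨b, rfl⟩; exact (abs_le.mp (h b)).1⟩ _).trans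
      (abs_le.mp (h (Classical.arbitrary _))).2

/-- Suprema commute with ultralimits. -/
lemma tendsto_iSup_of_forall {I X Y : Type} [Nonempty X] [Nonempty Y] {l : Filter I}
    (P : (I → X) → Y) (hP : Surjective P) (F : I → X → ℝ) (G : Y → ℝ) (M : ℝ)
    (hF : ∀ i x, F i x ≤ M) (hG : ∀ y, G y ≤ M)
    (h : ∀ g : I → X, Tendsto (fun i => F i (g i)) l (𝓝 (G (P g)))) :
    Tendsto (fun i => ⨆ x, F i x) l (𝓝 (⨆ y, G y)) := by
  have hFb : ∀ i, BddAbove (Set.range (F i)) := fun i => ⟨M, by rintro _ ⟨x, rfl⟩; exact hF i x⟩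
  have hGb : BddAbove (Set.range G) := ⟨M, by rintro _ ⟨x, rfl⟩; exact hG x⟩
  rw [tendsto_order]
  constructor
  · intro r hr
    obtain ⟨y, hy⟩ := exists_lt_of_lt_ciSup hr
    obtain ⟨g, rfl⟩ := hP y
    filter_upwards [(h g).eventually (lt_mem_nhds hy)] with i hi
    exact hi.trans_le (le_ciSup (hFb i) _)
  · intro r hr
    have hε : 0 < (r - ⨆ y, G y) / 2 := by linarith
    choose g hg using fun i => exists_lt_of_lt_ciSup (sub_lt_self (⨆ x, F i x) hε)
    have h1 : G (P g) < (⨆ y, G y) + (r - ⨆ y, G y) / 2 := by linarith [le_ciSup hGb (P g)]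
    filter_upwards [(h g).eventually (gt_mem_nhds h1)] with i hi
    linarith [hg i]

lemma iSup_neg_real {X : Type} (F : X → ℝ) : ⨆ x, -F x = -⨅ x, F x := by
  rw [iInf, Real.sInf_def, neg_neg, iSup, ← Set.image_neg_eq_neg, ← Set.range_comp]
  rfl

section Los

variable {I A B : Type} [CStarAlgebra A] [CStarAlgebra B] {U : Ultrafilter I} {π : (I → A) → B}
  (h : IsCStarUltraproduct U (fun _ => A) B π)
include h

lemma IsCStarUltraproduct.norm_le {f : I → A} {M : ℝ} (hf : ∀ i, ‖f i‖ ≤ M) : ‖π f‖ ≤ M :=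
  le_of_tendsto' (h.norm_eq f ⟨M, hf⟩) hf

/-- Łoś's theorem for terms. -/
lemma IsCStarUltraproduct.eval {n : ℕ} (t : CTerm n) (f : Fin n → I → A) (hf : ∀ k, Bdd (f k)) :
    Bdd (fun i => t.eval fun k => f k i) ∧
      π (fun i => t.eval fun k => f k i) = t.eval fun k => π (f k) := by
  induction t with
  | var k =>
    simp only [CTerm.eval_var]
    exact ⟨hf k, trivial⟩
  | one =>
    simp only [CTerm.eval_one]
    exact ⟨Bdd.one, h.map_one⟩
  | add s t hs ht =>
    simp only [CTerm.eval_add, ← hs.2, ← ht.2]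
    exact ⟨hs.1.add ht.1, h.map_add _ _ hs.1 ht.1⟩
  | mul s t hs ht =>
    simp only [CTerm.eval_mul, ← hs.2, ← ht.2]
    exact ⟨hs.1.mul ht.1, h.map_mul _ _ hs.1 ht.1⟩
  | star t ht =>
    simp only [CTerm.eval_star, ← ht.2]
    exact ⟨ht.1.star, h.map_star _ ht.1⟩
  | smul c t ht =>
    simp only [CTerm.eval_smul, ← ht.2]
    exact ⟨ht.1.smul c, h.map_smul c _ ht.1⟩

/-- The canonical map from families in the unit ball onto the unit ball of the ultrapower. -/
def IsCStarUltraproduct.ball (g : I → {x : A // ‖x‖ ≤ 1}) : {x : B // ‖x‖ ≤ 1} :=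
  ⟨π fun i => (g i).1, h.norm_le fun i => (g i).2⟩

lemma IsCStarUltraproduct.ball_surjective : Surjective h.ball := by
  rintro ⟨b, hb⟩
  obtain ⟨f, hf, rfl⟩ := h.surj b
  exact ⟨fun i => ⟨f i, (hf i).trans hb⟩, rfl⟩

omit h in
lemma los_snoc {n : ℕ} {phi : Formula (n + 1)} (f : Fin n → I → A) (hf : ∀ k i, ‖f k i‖ ≤ 1)
    (g : I → {x : A // ‖x‖ ≤ 1})
    (ih : ∀ f : Fin (n + 1) → I → A, (∀ k i, ‖f k i‖ ≤ 1) →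
      Tendsto (fun i => phi.interp A fun k => f k i) U (𝓝 (phi.interp B fun k => π (f k)))) :
    Tendsto (fun i => phi.interp A (Fin.snoc (fun k => f k i) (g i).1)) U
      (𝓝 (phi.interp B (Fin.snoc (fun k => π (f k)) (π fun i => (g i).1)))) := by
  have h1 := ih (Fin.snoc f fun i => (g i).1) fun k i => by
    refine Fin.lastCases ?_ (fun k => ?_) k
    · rw [Fin.snoc_last]
      exact (g i).2
    · rw [Fin.snoc_castSucc]
      exact hf k i
  rw [comp_snoc π] at h1
  refine h1.congr fun i => ?_
  rw [comp_snoc fun v : I → A => v i]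

/-- Łoś's theorem for the continuous logic of C*-algebras. -/
lemma IsCStarUltraproduct.los {n : ℕ} (phi : Formula n) (f : Fin n → I → A)
    (hf : ∀ k i, ‖f k i‖ ≤ 1) :
    Tendsto (fun i => phi.interp A fun k => f k i) U (𝓝 (phi.interp B fun k => π (f k))) := by
  induction phi with
  | atom t =>
    obtain ⟨h1, h2⟩ := h.eval t f fun k => ⟨1, hf k⟩
    have h3 := h.norm_eq _ h1
    rw [h2] at h3
    exact h3
  | comb u hu phis ih =>
    exact (hu.tendsto _).comp (tendsto_pi_nhds.mpr fun j => ih j f hf)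
  | sup phi ih =>
    have _ : Nonempty {x : A // ‖x‖ ≤ 1} := ⟨0, by simp⟩
    have _ : Nonempty {x : B // ‖x‖ ≤ 1} := ⟨0, by simp⟩
    obtain ⟨M, hM⟩ := phi.exists_bound
    refine tendsto_iSup_of_forall h.ball h.ball_surjective
      (fun i b => phi.interp A (Fin.snoc (fun k => f k i) b.1))
      (fun b => phi.interp B (Fin.snoc (fun k => π (f k)) b.1)) M ?_ ?_ ?_
    · exact fun i b => (abs_le.mp (hM A _ (norm_snoc_le (fun k => hf k i) b.2))).2
    · exact fun b => (abs_le.mp (hM B _ (norm_snoc_le (fun k => h.norm_le (hf k)) b.2))).2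
    · exact fun g => los_snoc f hf g ih
  | inf phi ih =>
    have _ : Nonempty {x : A // ‖x‖ ≤ 1} := ⟨0, by simp⟩
    have _ : Nonempty {x : B // ‖x‖ ≤ 1} := ⟨0, by simp⟩
    obtain ⟨M, hM⟩ := phi.exists_bound
    have h1 := tendsto_iSup_of_forall (l := U) h.ball h.ball_surjective
      (fun i b => -phi.interp A (Fin.snoc (fun k => f k i) b.1))
      (fun b => -phi.interp B (Fin.snoc (fun k => π (f k)) b.1)) M ?_ ?_ ?_
    · have h2 := h1.neg
      simp only [iSup_neg_real, neg_neg] at h2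
      exact h2
    · exact fun i b => neg_le.mp (abs_le.mp (hM A _ (norm_snoc_le (fun k => hf k i) b.2))).1
    · exact fun b => neg_le.mp (abs_le.mp (hM B _ (norm_snoc_le (fun k => h.norm_le (hf k)) b.2))).1
    · exact fun g => (los_snoc f hf g ih).neg

/-- An ultrapower is elementarily equivalent to the original algebra. -/
lemma IsCStarUltraproduct.elemEquiv : ElemEquiv A B := by
  intro σ
  have h1 := h.los σ (fun k => k.elim0) fun k => k.elim0
  have h2 : ∀ i : I, (fun k : Fin 0 => (k.elim0 : I → A) i) = finZeroElim :=
    fun i => Subsingleton.elim _ _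
  have h3 : (fun k : Fin 0 => π k.elim0) = finZeroElim := Subsingleton.elim _ _
  simp only [h2, h3] at h1
  exact tendsto_nhds_unique tendsto_const_nhds h1

end Los

lemma maxNorm_smul {A B : Type} [CStarAlgebra A] [CStarAlgebra B] {c : ℝ} (hc : 0 < c)
    (x : A ⊗[ℂ] B) : maxNorm A B ((c : ℂ) • x) = c * maxNorm A B x := by
  have hn : ∀ (c : ℝ), 0 < c → ∀ x : A ⊗[ℂ] B,
      maxNorm A B ((c : ℂ) • x) ≤ c * maxNorm A B x := by
    intro c hc x
    have h0 : 0 ≤ maxNorm A B x := Real.sSup_nonneg (by rintro _ ⟨p, rfl⟩; exact norm_nonneg _)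
    refine maxNorm_le (mul_nonneg hc.le h0) fun p => ?_
    rw [map_smul, norm_smul, Complex.norm_real, Real.norm_of_nonneg hc.le]
    exact mul_le_mul_of_nonneg_left (norm_hom_le_maxNorm p x) hc.le
  refine le_antisymm (hn c hc x) ?_
  have h1 := hn c⁻¹ (inv_pos.mpr hc) ((c : ℂ) • x)
  rw [smul_smul, ← Complex.ofReal_mul, inv_mul_cancel₀ hc.ne', Complex.ofReal_one,
    one_smul] at h1
  calc c * maxNorm A B x ≤ c * (c⁻¹ * maxNorm A B ((c : ℂ) • x)) :=
        mul_le_mul_of_nonneg_left h1 hc.le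
    _ = _ := mul_inv_cancel_left₀ hc.ne' _

/-- If the maximal tensor norm is a definable predicate over the class of algebras elementarily
equivalent to `A`, then Łoś's theorem gives property max-`U` for every ultrafilter `U`. -/
theorem hasMaxU_of_definable {A : Type} [CStarAlgebra A] {I : Type} (U : Ultrafilter I)
    (hdef : ∀ (n : ℕ) (ε : ℝ), 0 < ε → ∃ phi : Formula (n + n),
        ∀ (B : Type) [CStarAlgebra B], ElemEquiv A B →
          ∀ a b : Fin n → B, (∀ k, ‖a k‖ ≤ 1) → (∀ k, ‖b k‖ ≤ 1) →
            |maxNorm B B (∑ k, a k ⊗ₜ[ℂ] b k) - phi.interp B (Fin.append a b)| ≤ ε) :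
    HasMaxU U A := by
  intro B _ π h n f g hf hg
  have unit_ball : ∀ f g : Fin n → I → A, (∀ k i, ‖f k i‖ ≤ 1) → (∀ k i, ‖g k i‖ ≤ 1) →
      Tendsto (fun i => maxNorm A A (∑ k, f k i ⊗ₜ[ℂ] g k i)) (U : Filter I)
        (𝓝 (maxNorm B B (∑ k, π (f k) ⊗ₜ[ℂ] π (g k)))) := by
    intro f g hf hg
    rw [Metric.tendsto_nhds]
    intro ε hε
    obtain ⟨phi, hphi⟩ := hdef n (ε / 4) (by positivity)
    have h1 := h.los phi (Fin.append f g) fun k i => by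
      refine Fin.addCases (fun k => ?_) (fun k => ?_) k
      · rw [Fin.append_left]
        exact hf k i
      · rw [Fin.append_right]
        exact hg k i
    rw [comp_append π] at h1
    replace h1 := h1.congr fun i => by rw [comp_append fun v : I → A => v i]
    have h2 := hphi B h.elemEquiv (fun k => π (f k)) (fun k => π (g k))
      (fun k => h.norm_le (hf k)) fun k => h.norm_le (hg k)
    filter_upwards [Metric.tendsto_nhds.mp h1 (ε / 4) (by positivity)] with i hi
    have h3 := hphi A (fun _ => rfl) (fun k => f k i) (fun k => g k i) (fun k => hf k i)
      fun k => hg k i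
    rw [Real.dist_eq, abs_lt] at hi ⊢
    rw [abs_le] at h2 h3
    constructor <;> linarith [hi.1, hi.2, h2.1, h2.2, h3.1, h3.2]
  choose F hF using hf
  choose G hG using hg
  -- A common bound for all families; rescaling by its inverse moves them into the unit ball.
  let M : ℝ := 1 + ∑ k, |F k| + ∑ k, |G k|
  have hF0 : 0 ≤ ∑ k, |F k| := Finset.sum_nonneg fun k _ => abs_nonneg _
  have hG0 : 0 ≤ ∑ k, |G k| := Finset.sum_nonneg fun k _ => abs_nonneg _
  have hM : 0 < M := by positivity
  have hFM : ∀ k i, ‖f k i‖ ≤ M := fun k i => by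
    have := Finset.single_le_sum (f := fun k => |F k|) (fun k _ => abs_nonneg _)
      (Finset.mem_univ k)
    linarith [hF k i, le_abs_self (F k)]
  have hGM : ∀ k i, ‖g k i‖ ≤ M := fun k i => by
    have := Finset.single_le_sum (f := fun k => |G k|) (fun k _ => abs_nonneg _)
      (Finset.mem_univ k)
    linarith [hG k i, le_abs_self (G k)]
  have hscale : ∀ x : A, ‖x‖ ≤ M → ‖((M⁻¹ : ℝ) : ℂ) • x‖ ≤ 1 := fun x hx => by
    rw [norm_smul, Complex.norm_real, Real.norm_of_nonneg (inv_pos.mpr hM).le]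
    calc M⁻¹ * ‖x‖ ≤ M⁻¹ * M := mul_le_mul_of_nonneg_left hx (inv_pos.mpr hM).le
      _ = 1 := inv_mul_cancel₀ hM.ne'
  have h1 := unit_ball (fun k => ((M⁻¹ : ℝ) : ℂ) • f k) (fun k => ((M⁻¹ : ℝ) : ℂ) • g k)
    (fun k i => hscale _ (hFM k i)) (fun k i => hscale _ (hGM k i))
  have h2 : ∀ k, π (((M⁻¹ : ℝ) : ℂ) • f k) = ((M⁻¹ : ℝ) : ℂ) • π (f k) :=
    fun k => h.map_smul _ _ ⟨_, hF k⟩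
  have h3 : ∀ k, π (((M⁻¹ : ℝ) : ℂ) • g k) = ((M⁻¹ : ℝ) : ℂ) • π (g k) :=
    fun k => h.map_smul _ _ ⟨_, hG k⟩
  have hMM : 0 < M⁻¹ * M⁻¹ := by positivity
  have hsum : ∀ {C : Type} [CStarAlgebra C] (a b : Fin n → C),
      maxNorm C C (∑ k, (((M⁻¹ : ℝ) : ℂ) • a k) ⊗ₜ[ℂ] (((M⁻¹ : ℝ) : ℂ) • b k)) =
        (M⁻¹ * M⁻¹) * maxNorm C C (∑ k, a k ⊗ₜ[ℂ] b k) := by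
    intro C _ a b
    rw [← maxNorm_smul hMM, Finset.smul_sum]
    simp only [TensorProduct.smul_tmul_smul, Complex.ofReal_mul]
  simp only [Pi.smul_apply, h2, h3, hsum] at h1
  have h4 := h1.const_mul (M⁻¹ * M⁻¹)⁻¹
  simpa only [inv_mul_cancel_left₀ hMM.ne'] using h4

/-- Suppose the C*-algebra `A` is surjectively universal, satisfies
`A ≅ A × A`, and does not have the lifting property.  Then for every cofinal
(nonprincipal) ultrafilter `U` on the directed set of finite subsets of `ℕ`, `A` does not
have property max-`U`; in particular, `P^max` is not `Th(A)`-definable (not definable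
over the class of C*-algebras elementarily equivalent to `A`). -/
theorem not_hasMaxU_of_surjectivelyUniversal (A : Type) [CStarAlgebra A]
    (hsurj : SurjectivelyUniversal A)
    (hsquare : Nonempty (A ≃⋆ₐ[ℂ] (A × A)))
    (hlp : ¬ HasLP A) :
    (∀ U : Ultrafilter (Finset ℕ), (∀ J : Finset ℕ, U ≠ pure J) →
      (∀ J₀ : Finset ℕ, {J : Finset ℕ | J₀ ⊆ J} ∈ U) → ¬ HasMaxU U A) ∧
    ¬ (∀ (n : ℕ) (ε : ℝ), 0 < ε → ∃ phi : Formula (n + n),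
        ∀ (B : Type) [CStarAlgebra B], ElemEquiv A B →
          ∀ a b : Fin n → B, (∀ k, ‖a k‖ ≤ 1) → (∀ k, ‖b k‖ ≤ 1) →
            |maxNorm B B (∑ k, a k ⊗ₜ[ℂ] b k) - phi.interp B (Fin.append a b)| ≤ ε) := by
  constructor
  · intro U _ hU
    refine not_hasMaxU hsurj fun n => ?_
    filter_upwards [hU (Finset.range n)] with J hJ
    simpa using Finset.card_le_card hJ
  · intro hdef
    let U : Ultrafilter (Finset ℕ) := Ultrafilter.of atTop
    refine not_hasMaxU (U := U) hsurj (fun n => ?_) (hasMaxU_of_definable U hdef)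
    have hU : ∀ᶠ J in (U : Filter (Finset ℕ)), Finset.range n ≤ J :=
      Ultrafilter.of_le _ (eventually_ge_atTop (Finset.range n))
    filter_upwards [hU] with J hJ
    simpa using Finset.card_le_card hJ

end
end

section
/- There exists a surjectively universal C*-algebra A without the lifting property such that A ≅ A × A. (Concretely, if G is a countable discrete group such that C*(G) does not have the LP, one may take A = ℓ∞(A_n : n ∈ ℕ) where each A_n = C*(𝔽_∞) * C*(G) = C*(𝔽_∞ * G).) -/
/-!
Take `A = ℓ∞(ℕ, D × C(βℕ ∖ ℕ))`, where `D` is the bounded product of all nontrivial C*-algebra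
structures whose underlying set is a set of real sequences.

* Splitting a sequence into its even and odd terms gives `A ≅ A × A`.
* A separable C*-algebra embeds as a set into `ℕ → ℝ` through the distances to a dense sequence, so
  it is isomorphic to one of the factors of `D`, and coordinate projections are surjective.
* The restriction map `C(βℕ) → C(βℕ ∖ ℕ)`, that is `ℓ∞ → ℓ∞/c₀`, is surjective by Tietze's theorem,
  and the coordinate map `A → C(βℕ ∖ ℕ)` has no ucp lift through it. An uncountable almost disjoint
  family of subsets of `ℕ` gives uncountably many nonzero mutually orthogonal projections of
  `C(βℕ ∖ ℕ)`, which lift to mutually orthogonal projections of `A`. Under a ucp map into `C(βℕ)`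
  their values at each point of `ℕ` have finite partial sums bounded by `1`, so all but countably
  many of them vanish on the dense subset `ℕ`, hence everywhere. A lift cannot send any of these
  projections to zero.

The countable set `ℕ` is realised below as `List Bool`, the vertices of the binary tree, whose
branches are almost disjoint.
-/

open scoped TensorProduct
open Filter Topology Function

noncomputable section

/-- `A ≅ A × A` as C*-algebras. -/
def SquareIso (A : Type) [CStarAlgebra A] : Prop := Nonempty (A ≃⋆ₐ[ℂ] (A × A))

/-! ### A set of representatives of the separable C*-algebras -/

section Transport

variable {S B : Type} [CStarAlgebra B] (e : S ≃ B)

/-- Transport of a C*-algebra structure along a bijection. -/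
abbrev transportCStar : CStarAlgebra S :=
  letI := e.ring
  letI := e.algebra ℂ
  letI := e.starRing
  letI : NormedRing S := NormedRing.induced S B e.ringEquiv e.injective
  letI : NormedAlgebra ℂ S :=
    { norm_smul_le := fun a b => by
        change ‖e (e.symm (a • e b))‖ ≤ ‖a‖ * ‖e b‖
        rw [e.apply_symm_apply]
        exact norm_smul_le _ _ }
  { complete := by
      have hi : IsUniformInducing e := ⟨rfl⟩
      have hS : CompleteSpace S :=
        (completeSpace_congr (e := e) hi.isUniformEmbedding).2 inferInstance
      exact fun {_} hf => hS.complete hf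
    norm_mul_self_le := fun x => by
      change ‖e x‖ * ‖e x‖ ≤ ‖e (e.symm (e (e.symm (star (e x))) * e x))‖
      simp [CStarRing.norm_star_mul_self]
    star_smul := fun r x => by
      apply e.injective
      change e (e.symm (star (e (e.symm (r • e x))))) =
        e (e.symm (star r • e (e.symm (star (e x)))))
      simp }

/-- The transported structure makes the bijection a *-isomorphism. -/
def transportEquiv : letI := transportCStar e; S ≃⋆ₐ[ℂ] B :=
  letI := transportCStar e
  { e with
    map_mul' := fun _ _ => e.apply_symm_apply _
    map_add' := fun _ _ => e.apply_symm_apply _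
    map_star' := fun _ => e.apply_symm_apply _
    map_smul' := fun _ _ => e.apply_symm_apply _ }

end Transport

/-- The nontrivial C*-algebra structures carried by sets of real sequences. Since a separable
metric space has at most the cardinality of the continuum, this small set contains an isomorphic
copy of every nontrivial separable C*-algebra. -/
def ContinuumCStar : Type := {p : Σ S : Set (ℕ → ℝ), CStarAlgebra S // Nontrivial p.1}

/-- The C*-algebra named by an index. -/
abbrev ContinuumCStar.carrier (i : ContinuumCStar) : Type := i.1.1

instance (i : ContinuumCStar) : CStarAlgebra i.carrier := i.1.2

instance (i : ContinuumCStar) : Nontrivial i.carrier := i.2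

theorem exists_continuumCStar_equiv (B : Type) [CStarAlgebra B] [Nontrivial B]
    [TopologicalSpace.SeparableSpace B] :
    ∃ i : ContinuumCStar, Nonempty (i.carrier ≃⋆ₐ[ℂ] B) := by
  -- A point is determined by its distances to a dense sequence.
  let f : B → ℕ → ℝ := fun b n => dist b (TopologicalSpace.denseSeq B n)
  have hf : Injective f := by
    intro a b h
    have h1 : Continuous fun y : B => dist a y := by fun_prop
    have h2 : Continuous fun y : B => dist b y := by fun_prop
    have h3 := DenseRange.equalizer (TopologicalSpace.denseRange_denseSeq B) h1 h2 h
    have h4 := congrFun h3 b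
    simpa using h4
  let e : Set.range f ≃ B := (Equiv.ofInjective f hf).symm
  exact ⟨⟨⟨Set.range f, transportCStar e⟩, e.nontrivial⟩, ⟨transportEquiv e⟩⟩

/-! ### Bounded products -/

section Product

open scoped ENNReal

instance lpInftyCStar {I : Type} {E : I → Type} [∀ i, Nontrivial (E i)]
    [∀ i, CStarAlgebra (E i)] : CStarAlgebra (lp E ∞) where

/-- The coordinate projection of the bounded product `ℓ∞(E i : i ∈ I)`. -/
def lpEval {I : Type} {E : I → Type} [∀ i, Nontrivial (E i)]
    [∀ i, CStarAlgebra (E i)] (i : I) : lp E ∞ →⋆ₐ[ℂ] E i where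
  toFun f := f i
  map_one' := rfl
  map_mul' _ _ := rfl
  map_zero' := rfl
  map_add' _ _ := rfl
  commutes' _ := rfl
  map_star' _ := rfl

theorem lpEval_surjective {I : Type} {E : I → Type} [∀ i, Nontrivial (E i)]
    [∀ i, CStarAlgebra (E i)] (i : I) : Surjective (lpEval (E := E) i) := by
  classical
  exact fun x => ⟨lp.single ∞ i x, lp.single_apply_self (E := E) ∞ i x⟩

/-- The bounded product of all nontrivial C*-algebras carried by sets of real sequences. -/
abbrev ContinuumProduct : Type := lp ContinuumCStar.carrier ∞

end Product

open BoundedContinuousFunction in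
/-- Splitting a bounded sequence into its even and odd parts. -/
theorem squareIso_bounded_sequences (E : Type) [CStarAlgebra E] : SquareIso (ℕ →ᵇ E) := by
  let f : (ℕ →ᵇ E) →⋆ₐ[ℂ] (ℕ →ᵇ E) × (ℕ →ᵇ E) :=
    { toFun := fun u => (u.compContinuous ⟨fun n => 2 * n, continuous_of_discreteTopology⟩,
        u.compContinuous ⟨fun n => 2 * n + 1, continuous_of_discreteTopology⟩)
      map_one' := rfl
      map_mul' := fun _ _ => rfl
      map_zero' := rfl
      map_add' := fun _ _ => rfl
      commutes' := fun _ => rfl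
      map_star' := fun _ => rfl }
  refine ⟨StarAlgEquiv.ofBijective f ⟨?_, ?_⟩⟩
  · intro u v h
    ext n
    rcases Nat.even_or_odd' n with ⟨k, rfl | rfl⟩
    · exact DFunLike.congr_fun (congrArg Prod.fst h) k
    · exact DFunLike.congr_fun (congrArg Prod.snd h) k
  · rintro ⟨u, v⟩
    refine ⟨ofNormedAddCommGroupDiscrete
      (fun n => if n % 2 = 0 then u (n / 2) else v (n / 2)) (max ‖u‖ ‖v‖) ?_, ?_⟩
    · intro n
      split_ifs
      · exact (u.norm_coe_le_norm _).trans (le_max_left _ _)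
      · exact (v.norm_coe_le_norm _).trans (le_max_right _ _)
    · refine Prod.ext ?_ ?_
      · ext n
        change (if (2 * n) % 2 = 0 then u (2 * n / 2) else v (2 * n / 2)) = u n
        simp
      · ext n
        change (if (2 * n + 1) % 2 = 0 then u ((2 * n + 1) / 2) else v ((2 * n + 1) / 2)) = v n
        rw [if_neg (by omega), show (2 * n + 1) / 2 = n by omega]

/-! ### Completely positive maps -/

theorem IsUCP.of_starAlgHom {A B : Type} [CStarAlgebra A] [CStarAlgebra B] (π : A →⋆ₐ[ℂ] B) :
    IsUCP (π.toAlgHom.toLinearMap) := by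
  refine ⟨map_one π, ?_⟩
  rintro m M ⟨N, rfl⟩
  refine ⟨N.map π, ?_⟩
  ext i j
  simp [Matrix.mul_apply, map_star]

/-- The case `m = 1` of complete positivity. -/
theorem IsUCP.exists_star_mul_self {A B : Type} [CStarAlgebra A] [CStarAlgebra B]
    {ψ : A →ₗ[ℂ] B} (h : IsUCP ψ) (b : A) : ∃ p : B, ψ (star b * b) = star p * p := by
  obtain ⟨P, hP⟩ := h.2 1 (Matrix.of fun _ _ => star b * b)
    ⟨Matrix.of fun _ _ => b, by ext i j; simp [Matrix.mul_apply]⟩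
  refine ⟨P 0 0, ?_⟩
  have := congrFun (congrFun hP 0) 0
  simpa [Matrix.mul_apply] using this

/-- On a space with a countable dense subset, a unital completely positive map into the continuous
functions kills all but countably many members of a family of mutually orthogonal projections:
at a fixed point `t` the values of the images are nonnegative with sum at most `1`, so only
countably many of them are nonzero. -/
theorem countable_setOf_ucp_ne_zero {A K T ι : Type} [CStarAlgebra A] [TopologicalSpace K]
    [CompactSpace K] [Countable T] {d : T → K} (hd : DenseRange d)
    {ψ : A →ₗ[ℂ] C(K, ℂ)} (hψ : IsUCP ψ) (e : ι → A) (hsa : ∀ x, star (e x) = e x)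
    (hid : ∀ x, e x * e x = e x) (horth : ∀ x y, x ≠ y → e x * e y = 0) :
    {x | ψ (e x) ≠ 0}.Countable := by
  classical
  have key : ∀ b : A, star b = b → b * b = b → ∀ t, ∃ r : ℝ, 0 ≤ r ∧ ψ b t = r := by
    intro b hb hbb t
    obtain ⟨p, hp⟩ := hψ.exists_star_mul_self b
    rw [hb, hbb] at hp
    refine ⟨Complex.normSq (p t), Complex.normSq_nonneg _, ?_⟩
    rw [hp, Complex.normSq_eq_conj_mul_self]
    rfl
  choose r hr0 hr using fun x => key (e x) (hsa x) (hid x)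
  have hsum : ∀ t (s : Finset ι), ∑ x ∈ s, r x t ≤ 1 := by
    intro t s
    set P : A := ∑ x ∈ s, e x with hP
    have hPs : star P = P := by simp [hP, star_sum, hsa]
    have hPP : P * P = P := by
      rw [hP, Finset.sum_mul_sum]
      refine Finset.sum_congr rfl fun x hx => ?_
      rw [Finset.sum_eq_single_of_mem x hx fun y _ hyx => horth x y hyx.symm, hid]
    obtain ⟨c, hc0, hc⟩ := key (1 - P) (by simp [hPs])
      (by simp [mul_sub, sub_mul, hPP]) t
    have h1 : ψ (1 - P) t = 1 - ∑ x ∈ s, (r x t : ℂ) := by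
      rw [map_sub, hψ.1, hP, map_sum]
      simp [hr]
    rw [h1] at hc
    have h2 : 1 - ∑ x ∈ s, r x t = c := by exact_mod_cast hc
    linarith
  have hcount : ∀ t, (support fun x => r x t).Countable := fun t =>
    (summable_of_sum_le (fun x => hr0 x t) (hsum t)).countable_support
  refine (Set.countable_iUnion fun n : T => hcount (d n)).mono ?_
  intro x hx
  by_contra hcon
  apply hx
  have hz : (ψ (e x) : K → ℂ) = fun _ => 0 := by
    refine hd.equalizer (map_continuous _) continuous_const (funext fun n => ?_)
    simp only [Set.mem_iUnion, mem_support, not_exists, not_not] at hcon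
    simp [hr, hcon n]
  ext t
  exact congrFun hz t

/-! ### The corona of a countable discrete space -/

/-- The branch of the binary tree along `x`: the set of finite initial segments of `x`. -/
def branch (x : ℕ → Bool) : Set (List Bool) := {l | l = (List.range l.length).map x}

theorem branch_infinite (x : ℕ → Bool) : (branch x).Infinite := by
  refine Set.infinite_of_injective_forall_mem (f := fun n => (List.range n).map x) ?_ ?_
  · intro m n h
    simpa using congrArg List.length h
  · intro n
    simp [branch]

theorem branch_inter_finite {x y : ℕ → Bool} (h : x ≠ y) : (branch x ∩ branch y).Finite := by
  obtain ⟨k, hk⟩ := Function.ne_iff.1 h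
  refine (List.finite_length_le Bool k).subset ?_
  rintro l ⟨hx, hy⟩
  by_contra hl
  simp only [Set.mem_ofPred_eq, not_le] at hl
  have h2 : (List.range l.length).map x = (List.range l.length).map y := hx.symm.trans hy
  have h3 := List.map_inj_left.1 h2 k (List.mem_range.2 hl)
  exact hk h3

/-- The set of nonprincipal ultrafilters on the binary tree. -/
def coronaSet : Set (Ultrafilter (List Bool)) := {u | ∀ l, u ≠ pure l}

theorem coronaSet_isClosed : IsClosed coronaSet := by
  have : coronaSet = ⋂ l, {u : Ultrafilter (List Bool) | {l}ᶜ ∈ u} := by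
    ext u
    simp only [coronaSet, Set.mem_ofPred_eq, Set.mem_iInter]
    refine forall_congr' fun l => ?_
    rw [Ultrafilter.compl_mem_iff_notMem, not_iff_not]
    constructor
    · rintro rfl
      exact Ultrafilter.mem_pure.2 rfl
    · intro h
      obtain ⟨a, ha, hu⟩ := Ultrafilter.eq_pure_of_finite_mem (Set.finite_singleton l) h
      rw [hu, Set.mem_singleton_iff.1 ha]
  rw [this]
  exact isClosed_iInter fun l => ultrafilter_isClosed_basic _

/-- The Stone–Čech corona of the (countable, discrete) binary tree. Continuous functions on it
form the quotient `ℓ∞/c₀`. -/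
abbrev Corona : Type := coronaSet

instance : CompactSpace Corona := isCompact_iff_compactSpace.1 coronaSet_isClosed.isCompact

open scoped Classical in
/-- The projection in `C(Corona)` defined by the branch along `x`. -/
def branchProj (x : ℕ → Bool) : C(Corona, ℂ) where
  toFun u := if branch x ∈ u.1 then 1 else 0
  continuous_toFun := by
    have hc : IsClopen {u : Corona | branch x ∈ u.1} :=
      ⟨(ultrafilter_isClosed_basic _).preimage continuous_subtype_val,
        (ultrafilter_isOpen_basic _).preimage continuous_subtype_val⟩
    refine continuous_const.if (fun u hu => ?_) continuous_const
    rw [hc.frontier_eq] at hu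
    exact hu.elim

theorem branchProj_star (x : ℕ → Bool) : star (branchProj x) = branchProj x := by
  ext u
  simp only [branchProj, ContinuousMap.star_apply, ContinuousMap.coe_mk]
  split_ifs <;> simp

theorem branchProj_idem (x : ℕ → Bool) : branchProj x * branchProj x = branchProj x := by
  ext u
  simp only [branchProj, ContinuousMap.mul_apply, ContinuousMap.coe_mk]
  split_ifs <;> simp

theorem branchProj_orth {x y : ℕ → Bool} (h : x ≠ y) : branchProj x * branchProj y = 0 := by
  ext u
  simp only [branchProj, ContinuousMap.mul_apply, ContinuousMap.coe_mk]
  split_ifs with hx hy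
  · obtain ⟨l, -, hl⟩ := Ultrafilter.eq_pure_of_finite_mem (branch_inter_finite h)
      (Filter.inter_mem hx hy)
    exact (u.2 l hl).elim
  all_goals simp

theorem branchProj_ne_zero (x : ℕ → Bool) : branchProj x ≠ 0 := by
  have := (branch_infinite x).cofinite_inf_principal_neBot
  let u := Ultrafilter.of (Filter.cofinite ⊓ Filter.principal (branch x))
  have hu : (u : Filter (List Bool)) ≤ Filter.cofinite ⊓ Filter.principal (branch x) :=
    Ultrafilter.of_le _
  have hb : branch x ∈ u := hu (Filter.mem_inf_of_right (Filter.mem_principal_self _))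
  have hX : u ∈ coronaSet := by
    intro l hl
    have h1 : ({l}ᶜ : Set (List Bool)) ∈ u :=
      hu (Filter.mem_inf_of_left (Set.finite_singleton l).compl_mem_cofinite)
    rw [hl] at h1
    exact Ultrafilter.mem_pure.1 h1 rfl
  intro h0
  have h1 := DFunLike.congr_fun h0 (⟨u, hX⟩ : Corona)
  simp [branchProj, hb] at h1

/-- Restriction of continuous functions from the Stone–Čech compactification to the corona. -/
def coronaRestrict : C(Ultrafilter (List Bool), ℂ) →⋆ₐ[ℂ] C(Corona, ℂ) :=
  ContinuousMap.compStarAlgHom' ℂ ℂ ⟨Subtype.val, continuous_subtype_val⟩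

theorem coronaRestrict_surjective : Surjective coronaRestrict :=
  fun f => ContinuousMap.exists_restrict_eq coronaSet_isClosed f

/-- A *-homomorphism onto `ℓ∞/c₀` under which the branch projections lift to mutually orthogonal
projections admits no ucp lift to `ℓ∞`: such a lift would kill one of the uncountably many
branch projections. -/
theorem not_hasLP_of_branchProj_lift {A : Type} [CStarAlgebra A] (π : A →⋆ₐ[ℂ] C(Corona, ℂ))
    (e : (ℕ → Bool) → A) (hsa : ∀ x, star (e x) = e x) (hid : ∀ x, e x * e x = e x)
    (horth : ∀ x y, x ≠ y → e x * e y = 0) (hπ : ∀ x, π (e x) = branchProj x) :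
    ¬ HasLP A := by
  intro hLP
  obtain ⟨ψ, hψ, hq⟩ := hLP _ _ coronaRestrict coronaRestrict_surjective _ (IsUCP.of_starAlgHom π)
  have hc := countable_setOf_ucp_ne_zero denseRange_pure hψ e hsa hid horth
  have huniv : {x | ψ (e x) ≠ 0} = Set.univ := by
    refine Set.eq_univ_of_forall fun x hx => branchProj_ne_zero x ?_
    have h1 : coronaRestrict (ψ (e x)) = π (e x) := hq (e x)
    rw [← hπ, ← h1, hx, map_zero]
  rw [huniv] at hc
  have : Uncountable (ℕ → Bool) := Cardinal.aleph0_lt_mk_iff.1 (by simp [Cardinal.aleph0_lt_continuum])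
  exact Set.not_countable_univ hc

/-! ### The algebra -/

/-- The fibre `E = D × C(βℕ ∖ ℕ)`, where `D` has every nontrivial separable C*-algebra as a
quotient. -/
abbrev Fibre : Type := ContinuumProduct × C(Corona, ℂ)

open BoundedContinuousFunction

/-- The value at `0` of a bounded sequence in `Fibre`. -/
def evalZero : (ℕ →ᵇ Fibre) →⋆ₐ[ℂ] Fibre where
  toFun f := f 0
  map_one' := rfl
  map_mul' _ _ := rfl
  map_zero' := rfl
  map_add' _ _ := rfl
  commutes' _ := rfl
  map_star' _ := rfl

theorem evalZero_surjective : Surjective evalZero :=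
  fun x => ⟨BoundedContinuousFunction.const ℕ x, rfl⟩

theorem surjectivelyUniversal_bounded_sequences : SurjectivelyUniversal (ℕ →ᵇ Fibre) := by
  intro B _ hB
  rcases subsingleton_or_nontrivial B with h | h
  · exact ⟨{ toFun := fun _ => 0
             map_one' := Subsingleton.elim _ _
             map_mul' := fun _ _ => Subsingleton.elim _ _
             map_zero' := rfl
             map_add' := fun _ _ => Subsingleton.elim _ _
             commutes' := fun _ => Subsingleton.elim _ _
             map_star' := fun _ => Subsingleton.elim _ _ },
      fun b => ⟨0, Subsingleton.elim _ _⟩⟩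
  · obtain ⟨i, ⟨g⟩⟩ := exists_continuumCStar_equiv B
    refine ⟨(g : i.carrier →⋆ₐ[ℂ] B).comp ((lpEval i).comp
      ((StarAlgHom.fst ℂ ContinuumProduct C(Corona, ℂ)).comp evalZero)), ?_⟩
    exact g.surjective.comp ((lpEval_surjective i).comp
      (Prod.fst_surjective.comp evalZero_surjective))

theorem not_hasLP_bounded_sequences : ¬ HasLP (ℕ →ᵇ Fibre) := by
  refine not_hasLP_of_branchProj_lift
    ((StarAlgHom.snd ℂ ContinuumProduct C(Corona, ℂ)).comp evalZero)
    (fun x => BoundedContinuousFunction.const ℕ (0, branchProj x)) ?_ ?_ ?_ fun x => rfl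
  · intro x
    ext1 n
    exact Prod.ext (star_zero _) (branchProj_star x)
  · intro x
    ext1 n
    exact Prod.ext (mul_zero _) (branchProj_idem x)
  · intro x y hxy
    ext1 n
    exact Prod.ext (mul_zero _) (branchProj_orth hxy)

/-- There exists a surjectively universal C*-algebra `A` without the
lifting property such that `A ≅ A × A`. -/
theorem exists_surjectivelyUniversal_not_LP_squareIso :
    ∃ (A : Type) (instA : CStarAlgebra A),
      @SurjectivelyUniversal A instA ∧ ¬ @HasLP A instA ∧ @SquareIso A instA := by
  exact ⟨ℕ →ᵇ Fibre, inferInstance, surjectivelyUniversal_bounded_sequences,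
    not_hasLP_bounded_sequences, squareIso_bounded_sequences Fibre⟩

end
end
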